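/- Fix an integer d ≥ 1 and δ ∈ (0,1). Let a^{jk} : ℝ → ℝ (1 ≤ j,k ≤ d) be measurable functions of x¹ only, with a^{jk} = a^{kj} and δ|θ|² ≤ Σ_{j,k=1}^d a^{jk}(x¹) θ^j θ^k ≤ δ⁻¹|θ|² for all x¹ and θ ∈ ℝ^d. Set L₀u = u_t + Σ_{j,k} a^{jk}(x¹) u_{x^j x^k}. Let 2 < r < 3. If h is smooth on Q_4, h ∈ L²(Q_4), and L₀h = 0 in Q_4, then sup_{Q_1} |h| + sup_{Q_1} |h_{x¹}| ≤ N (∫_{Q_r} |h|² dx dt)^{1/2}, where N = N(r,d,δ). -/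

import Mathlib

open MeasureTheory

/-- Partial derivative in `t`. -/
noncomputable def pdt {d : ℕ} (u : ℝ × (Fin d → ℝ) → ℝ) : ℝ × (Fin d → ℝ) → ℝ :=
  fun p => fderiv ℝ u p (1, 0)

/-- Partial derivative in `x^j`. -/
noncomputable def pdx {d : ℕ} (j : Fin d) (u : ℝ × (Fin d → ℝ) → ℝ) :
    ℝ × (Fin d → ℝ) → ℝ :=
  fun p => fderiv ℝ u p (0, Pi.single j 1)

/-- Second partial derivative in `x^j, x^k`. -/
noncomputable def pdxx {d : ℕ} (j k : Fin d) (u : ℝ × (Fin d → ℝ) → ℝ) :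
    ℝ × (Fin d → ℝ) → ℝ :=
  pdx j (pdx k u)

/-- Open Euclidean ball `B_r ⊂ ℝ^d` centered at the origin. -/
def ballE (d : ℕ) (r : ℝ) : Set (Fin d → ℝ) := {x | ∑ j, (x j) ^ 2 < r ^ 2}

/-- Parabolic cylinder `Q_r = (0,r²) × B_r`. -/
def Qc (d : ℕ) (r : ℝ) : Set (ℝ × (Fin d → ℝ)) := Set.Ioo 0 (r ^ 2) ×ˢ ballE d r

noncomputable section

/-- directional derivative -/
def Dv {d : ℕ} (v : ℝ × (Fin d → ℝ)) (f : ℝ × (Fin d → ℝ) → ℝ) : ℝ × (Fin d → ℝ) → ℝ :=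
  fun p => fderiv ℝ f p v

/-- smooth -/
def Sm {d : ℕ} (f : ℝ × (Fin d → ℝ) → ℝ) : Prop := ContDiff ℝ (⊤ : ℕ∞) f

def et (d : ℕ) : ℝ × (Fin d → ℝ) := (1, 0)
def ex {d : ℕ} (j : Fin d) : ℝ × (Fin d → ℝ) := (0, Pi.single j 1)

theorem Sm.cont {d : ℕ} {f : ℝ × (Fin d → ℝ) → ℝ} (h : Sm f) : Continuous f := ContDiff.continuous h

theorem Sm.diff {d : ℕ} {f : ℝ × (Fin d → ℝ) → ℝ} (h : Sm f) : Differentiable ℝ f :=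
  ContDiff.differentiable h (by simp)

theorem Sm.Dv {d : ℕ} {f : ℝ × (Fin d → ℝ) → ℝ} (h : Sm f) (v : ℝ × (Fin d → ℝ)) : Sm (Dv v f) := by
  have : ContDiff ℝ (⊤ : ℕ∞) (fderiv ℝ f) := ContDiff.fderiv_right h (by simp)
  exact this.clm_apply contDiff_const

theorem Sm.mul {d : ℕ} {f g : ℝ × (Fin d → ℝ) → ℝ} (h : Sm f) (h' : Sm g) :
    Sm (fun p => f p * g p) := ContDiff.mul h h'

theorem Sm.add {d : ℕ} {f g : ℝ × (Fin d → ℝ) → ℝ} (h : Sm f) (h' : Sm g) :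
    Sm (fun p => f p + g p) := ContDiff.add h h'

theorem Sm.pow {d : ℕ} {f : ℝ × (Fin d → ℝ) → ℝ} (h : Sm f) (n : ℕ) :
    Sm (fun p => f p ^ n) := ContDiff.pow h n

theorem Dv_mul {d : ℕ} {f g : ℝ × (Fin d → ℝ) → ℝ} (h : Sm f) (h' : Sm g) (v) :
    Dv v (fun p => f p * g p) = fun p => Dv v f p * g p + f p * Dv v g p := by
  funext p
  unfold Dv
  have := fderiv_mul (h.diff p) (h'.diff p)
  have e : (fun p => f p * g p) = f * g := rfl
  rw [e, this]
  simp
  ring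

theorem Dv_add {d : ℕ} {f g : ℝ × (Fin d → ℝ) → ℝ} (h : Sm f) (h' : Sm g) (v) :
    Dv v (fun p => f p + g p) = fun p => Dv v f p + Dv v g p := by
  funext p
  unfold Dv
  have := fderiv_add (h.diff p) (h'.diff p)
  have e : (fun p => f p + g p) = f + g := rfl
  rw [e, this]
  simp

theorem Dv_sq {d : ℕ} {f : ℝ × (Fin d → ℝ) → ℝ} (h : Sm f) (v) :
    Dv v (fun p => f p ^ 2) = fun p => 2 * f p * Dv v f p := by
  have e : (fun p => f p ^ 2) = fun p => f p * f p := by funext p; ring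
  rw [e, Dv_mul h h]
  funext p; ring

theorem Dv_comm {d : ℕ} {f : ℝ × (Fin d → ℝ) → ℝ} (h : Sm f) (v w) :
    Dv v (Dv w f) = Dv w (Dv v f) := by
  have hd : Differentiable ℝ (fderiv ℝ f) :=
    (show ContDiff ℝ (⊤ : ℕ∞) (fderiv ℝ f) from ContDiff.fderiv_right h (by simp)).differentiable
      (by simp)
  have key : ∀ (v w p), Dv v (Dv w f) p = fderiv ℝ (fderiv ℝ f) p v w := by
    intro v w p
    unfold Dv
    have := ((hd p).hasFDerivAt.clm_apply (hasFDerivAt_const w p)).fderiv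
    rw [this]
    simp
  funext p
  rw [key, key]
  have : IsSymmSndFDerivAt ℝ f p := (ContDiff.contDiffAt h).isSymmSndFDerivAt
    (by simp only [minSmoothness_of_isRCLikeNormedField]; exact WithTop.coe_le_coe.2 (le_top : (2 : ℕ∞) ≤ ⊤))
  exact this v w

theorem tsupport_Dv {d : ℕ} (f : ℝ × (Fin d → ℝ) → ℝ) (v) : tsupport (Dv v f) ⊆ tsupport f :=
  tsupport_fderiv_apply_subset ℝ v

theorem cs_Dv {d : ℕ} {f : ℝ × (Fin d → ℝ) → ℝ} (h : HasCompactSupport f) (v) :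
    HasCompactSupport (Dv v f) := h.of_isClosed_subset (isClosed_tsupport _) (tsupport_Dv f v)

theorem hasLineDeriv {d : ℕ} {f : ℝ × (Fin d → ℝ) → ℝ} (h : Sm f) (v p) :
    HasLineDerivAt ℝ f (Dv v f p) p v := (h.diff p).hasFDerivAt.hasLineDerivAt v

/-- integrability -/
theorem int_bdd {d : ℕ} {c F : ℝ × (Fin d → ℝ) → ℝ} (hc : Measurable c) {M : ℝ}
    (hM : ∀ p, |c p| ≤ M) (hF : Continuous F) (hs : HasCompactSupport F) :
    Integrable (fun p => c p * F p) :=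
  (hF.integrable_of_hasCompactSupport hs).bdd_mul (c := M) hc.aestronglyMeasurable
    (Filter.Eventually.of_forall hM)

theorem int_line {d : ℕ} {c F : ℝ × (Fin d → ℝ) → ℝ} (hc : Measurable c) {M : ℝ}
    (hM : ∀ p, |c p| ≤ M) (v : ℝ × (Fin d → ℝ)) (hv : ∀ p (s : ℝ), c (p + s • v) = c p)
    (hF : Sm F) (hs : HasCompactSupport F) : ∫ p, c p * Dv v F p = 0 := by
  have : (volume : Measure (ℝ × (Fin d → ℝ))).IsAddHaarMeasure :=
    inferInstanceAs (((volume : Measure ℝ).prod (volume : Measure (Fin d → ℝ))).IsAddHaarMeasure)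
  have i1 : Integrable (fun p => c p * F p) := int_bdd hc hM hF.cont hs
  have i2 : Integrable (fun p => c p * Dv v F p) := int_bdd hc hM (hF.Dv v).cont (cs_Dv hs v)
  have := integral_bilinear_hasLineDerivAt_right_eq_neg_left_of_integrable
    (μ := (volume : Measure (ℝ × (Fin d → ℝ))))
    (f := fun p => c p * F p) (f' := fun p => c p * Dv v F p) (g := fun _ => (1:ℝ))
    (g' := fun _ => (0:ℝ)) (v := v) (B := ContinuousLinearMap.mul ℝ ℝ)
    (by simpa using i2) (by simp) (by simpa using i1)
    (by
      intro p _
      have h1 := (hasLineDeriv hF v p)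
      unfold HasLineDerivAt at h1 ⊢
      have := h1.const_mul (c p)
      refine this.congr_of_eventuallyEq (Filter.Eventually.of_forall fun s => ?_)
      simp [hv])
    (by
      intro p _
      exact hasDerivAt_const _ _)
  simp at this
  linarith

theorem int_time {d : ℕ} {b : (Fin d → ℝ) → ℝ} {F : ℝ × (Fin d → ℝ) → ℝ} (hb : Measurable b)
    {M : ℝ} (hM : ∀ p, |b p| ≤ M) (hb0 : ∀ p, 0 ≤ b p) (hF : Sm F) (hs : HasCompactSupport F)
    (hF0 : ∀ p, 0 ≤ F p) (t0 : ℝ) :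
    ∫ p in {p : ℝ × (Fin d → ℝ) | t0 < p.1}, b p.2 * Dv (et d) F p ≤ 0 := by
  have i2 : Integrable (fun p : ℝ × (Fin d → ℝ) => b p.2 * Dv (et d) F p) :=
    int_bdd (c := fun p => b p.2) (by fun_prop) (fun p => hM p.2) (hF.Dv _).cont (cs_Dv hs _)
  have e : {p : ℝ × (Fin d → ℝ) | t0 < p.1} = Set.Ioi t0 ×ˢ Set.univ := by
    ext p; simp
  rw [e]
  have hv : (volume : Measure (ℝ × (Fin d → ℝ))) = (volume : Measure ℝ).prod volume := rfl
  have i3 : IntegrableOn (fun p : ℝ × (Fin d → ℝ) => b p.2 * Dv (et d) F p)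
     (Set.Ioi t0 ×ˢ Set.univ) := i2.integrableOn
  rw [IntegrableOn, hv, ← Measure.prod_restrict] at i3
  rw [hv, ← Measure.prod_restrict, integral_prod_symm _ i3]
  refine integral_nonpos fun x => ?_
  simp only [Pi.zero_apply]
  rw [integral_const_mul]
  have hder : ∀ t, deriv (fun t => F (t, x)) t = Dv (et d) F (t, x) := by
    intro t
    have h1 : HasDerivAt (fun t : ℝ => ((t, x) : ℝ × (Fin d → ℝ))) (1, 0) t :=
      (hasDerivAt_id t).prodMk (hasDerivAt_const t x)
    exact ((hF.diff (t, x)).hasFDerivAt.comp_hasDerivAt t h1).deriv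
  have hsm : ContDiff ℝ 1 (fun t => F (t, x)) :=
    (ContDiff.of_le hF (by exact_mod_cast le_top)).comp (by fun_prop)
  have hcs : HasCompactSupport (fun t => F (t, x)) :=
    hs.comp_isClosedEmbedding (g := fun t : ℝ => ((t, x) : ℝ × (Fin d → ℝ)))
      ((Topology.IsClosedEmbedding.of_continuous_injective_isClosedMap (by fun_prop)
        (fun a b h => by simpa using h) (isClosedMap_prodMk_right x)))
  have := hcs.integral_Ioi_deriv_eq hsm t0
  simp_rw [hder] at this
  rw [this]
  have := mul_nonneg (hb0 x) (hF0 (t0, x))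
  linarith

theorem cutoff {d : ℕ} {K U : Set (ℝ × (Fin d → ℝ))} (hK : IsCompact K) (hU : IsOpen U)
    (h : K ⊆ U) : ∃ η : ℝ × (Fin d → ℝ) → ℝ, Sm η ∧ HasCompactSupport η ∧ tsupport η ⊆ U ∧
      (∀ p, 0 ≤ η p) ∧ (∀ p, η p ≤ 1) ∧ ∀ p ∈ K, η p = 1 := by
  obtain ⟨V, hV, hKV, hVU, hVc⟩ := exists_open_between_and_isCompact_closure hK hU h
  obtain ⟨f, hf, hr, hsupp, h1⟩ := exists_contMDiff_support_eq_eq_one_iff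
    (modelWithCornersSelf ℝ (ℝ × (Fin d → ℝ))) (n := (⊤ : ℕ∞)) hV hK.isClosed hKV
  have ht : tsupport f = closure V := by rw [tsupport, hsupp]
  refine ⟨f, hf.contDiff, ?_, ?_, ?_, ?_, ?_⟩
  · rw [HasCompactSupport, ht]; exact hVc
  · rw [ht]; exact hVU
  · exact fun p => (hr (Set.mem_range_self p)).1
  · exact fun p => (hr (Set.mem_range_self p)).2
  · exact fun p hp => (h1 p).1 hp


structure Coef {d : ℕ} (δ : ℝ) (a : ℝ → Fin d → Fin d → ℝ) : Prop where
  pos : 0 < δ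
  meas : ∀ j k, Measurable fun s => a s j k
  symm : ∀ s j k, a s j k = a s k j
  lo : ∀ (s : ℝ) (θ : Fin d → ℝ), δ * ∑ j, (θ j) ^ 2 ≤ ∑ j, ∑ k, a s j k * θ j * θ k
  hi : ∀ (s : ℝ) (θ : Fin d → ℝ), ∑ j, ∑ k, a s j k * θ j * θ k ≤ δ⁻¹ * ∑ j, (θ j) ^ 2

theorem Coef.diag_lo {d : ℕ} {δ : ℝ} {a : ℝ → Fin d → Fin d → ℝ} (h : Coef δ a) (s j) :
    δ ≤ a s j j := by
  have := h.lo s (Pi.single j 1)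
  simpa [Pi.single_apply] using this

theorem Coef.diag_hi {d : ℕ} {δ : ℝ} {a : ℝ → Fin d → Fin d → ℝ} (h : Coef δ a) (s j) :
    a s j j ≤ δ⁻¹ := by
  have := h.hi s (Pi.single j 1)
  simpa [Pi.single_apply] using this

theorem Coef.abs_le {d : ℕ} {δ : ℝ} {a : ℝ → Fin d → Fin d → ℝ} (h : Coef δ a) (s j k) :
    |a s j k| ≤ δ⁻¹ := by
  have p := h.pos
  by_cases hjk : j = k
  · subst hjk
    rw [abs_of_nonneg (p.le.trans (h.diag_lo s j))]
    exact h.diag_hi s j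
  have key : ∀ σ : ℝ, a s j j + 2 * σ * a s j k + σ ^ 2 * a s k k ≤ δ⁻¹ * (1 + σ ^ 2) := by
    intro σ
    have := h.hi s (Pi.single j 1 + Pi.single k σ)
    have e1 : ∑ i, ((Pi.single j 1 + Pi.single k σ : Fin d → ℝ) i) ^ 2 = 1 + σ ^ 2 := by
      have : ∀ i, ((Pi.single j 1 + Pi.single k σ : Fin d → ℝ) i) ^ 2
          = (Pi.single j 1 : Fin d → ℝ) i + (Pi.single k (σ^2) : Fin d → ℝ) i := by
        intro i
        by_cases h1 : i = j
        · subst h1; simp [hjk]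
        · by_cases h2 : i = k
          · subst h2; simp [h1]
          · simp [h1, h2]
      simp_rw [this, Finset.sum_add_distrib]
      simp
    rw [e1] at this
    refine le_trans (le_of_eq ?_) this
    simp only [Pi.add_apply, mul_add, add_mul, Finset.sum_add_distrib, Pi.single_apply]
    simp
    rw [h.symm s k j]
    ring
  have k1 := key 1
  have k2 := key (-1)
  have d1 := h.diag_lo s j
  have d2 := h.diag_lo s k
  rw [_root_.abs_le]
  constructor <;> linarith

/-- normalized coefficients -/
def cc {d : ℕ} (i0 : Fin d) (a : ℝ → Fin d → Fin d → ℝ) (j k : Fin d) (p : ℝ × (Fin d → ℝ)) : ℝ :=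
  a (p.2 i0) j k / a (p.2 i0) i0 i0

def bb {d : ℕ} (i0 : Fin d) (a : ℝ → Fin d → Fin d → ℝ) (x : Fin d → ℝ) : ℝ :=
  (a (x i0) i0 i0)⁻¹

theorem bb_lo {d : ℕ} {δ : ℝ} {a : ℝ → Fin d → Fin d → ℝ} (h : Coef δ a) (i0 x) :
    δ ≤ bb i0 a x := by
  have := h.diag_hi (x i0) i0
  have h1 := h.diag_lo (x i0) i0
  have := h.pos
  rw [bb, le_inv_comm₀ (by linarith) (by linarith)]
  assumption

theorem bb_hi {d : ℕ} {δ : ℝ} {a : ℝ → Fin d → Fin d → ℝ} (h : Coef δ a) (i0 x) :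
    bb i0 a x ≤ δ⁻¹ := by
  have h1 := h.diag_lo (x i0) i0
  have := h.pos
  exact inv_anti₀ this h1

theorem bb_meas {d : ℕ} {δ : ℝ} {a : ℝ → Fin d → Fin d → ℝ} (h : Coef δ a) (i0) :
    Measurable (bb i0 a) :=
  ((h.meas i0 i0).comp (measurable_pi_apply i0)).inv

theorem bb_abs {d : ℕ} {δ : ℝ} {a : ℝ → Fin d → Fin d → ℝ} (h : Coef δ a) (i0 x) :
    |bb i0 a x| ≤ δ⁻¹ := by
  rw [abs_of_nonneg (h.pos.le.trans (bb_lo h i0 x))]; exact bb_hi h i0 x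

theorem cc_abs {d : ℕ} {δ : ℝ} {a : ℝ → Fin d → Fin d → ℝ} (h : Coef δ a) (i0 j k p) :
    |cc i0 a j k p| ≤ δ⁻¹ ^ 2 := by
  have : cc i0 a j k p = a (p.2 i0) j k * bb i0 a p.2 := rfl
  rw [this, abs_mul, sq]
  exact mul_le_mul (h.abs_le _ _ _) (bb_abs h _ _) (abs_nonneg _) (inv_nonneg.2 h.pos.le)

theorem cc_meas {d : ℕ} {δ : ℝ} {a : ℝ → Fin d → Fin d → ℝ} (h : Coef δ a) (i0 j k) :
    Measurable (cc i0 a j k) := by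
  have m : Measurable (fun p : ℝ × (Fin d → ℝ) => p.2 i0) := by fun_prop
  exact ((h.meas j k).comp m).div ((h.meas i0 i0).comp m)

theorem cc_ell {d : ℕ} {δ : ℝ} {a : ℝ → Fin d → Fin d → ℝ} (h : Coef δ a) (i0 p)
    (ξ : Fin d → ℝ) : δ ^ 2 * ∑ j, ξ j ^ 2 ≤ ∑ j, ∑ k, cc i0 a j k p * ξ j * ξ k := by
  have e : ∑ j, ∑ k, cc i0 a j k p * ξ j * ξ k =
      bb i0 a p.2 * ∑ j, ∑ k, a (p.2 i0) j k * ξ j * ξ k := by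
    simp_rw [Finset.mul_sum]
    refine Finset.sum_congr rfl fun j _ => Finset.sum_congr rfl fun k _ => ?_
    rw [show cc i0 a j k p = a (p.2 i0) j k * bb i0 a p.2 from rfl]; ring
  rw [e, sq, mul_assoc]
  have hp := h.pos
  have : 0 ≤ ∑ j, ξ j ^ 2 := Finset.sum_nonneg fun _ _ => sq_nonneg _
  exact mul_le_mul (bb_lo h _ _) (h.lo _ _) (by positivity) (hp.le.trans (bb_lo h _ _))

/-- working domain -/
def UU (d : ℕ) : Set (ℝ × (Fin d → ℝ)) := Set.Ioo (-1) 4 ×ˢ ballE d 2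

theorem isOpen_ballE (d : ℕ) (ρ : ℝ) : IsOpen (ballE d ρ) :=
  isOpen_lt (by fun_prop) continuous_const

theorem isOpen_UU (d : ℕ) : IsOpen (UU d) := isOpen_Ioo.prod (isOpen_ballE d 2)

def mu (d : ℕ) (t0 : ℝ) : Measure (ℝ × (Fin d → ℝ)) :=
  volume.restrict {p : ℝ × (Fin d → ℝ) | t0 < p.1}

theorem ms (d : ℕ) (t0 : ℝ) : MeasurableSet {p : ℝ × (Fin d → ℝ) | t0 < p.1} :=
  measurableSet_lt measurable_const measurable_fst

structure Sol {d : ℕ} (i0 : Fin d) (t0 : ℝ) (a : ℝ → Fin d → Fin d → ℝ)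
    (u : ℝ × (Fin d → ℝ) → ℝ) : Prop where
  sm : Sm u
  eq : ∃ τ < t0, ∀ p : ℝ × (Fin d → ℝ), τ < p.1 → p ∈ UU d →
    Dv (et d) u p + ∑ j, ∑ k, a (p.2 i0) j k * Dv (ex j) (Dv (ex k) u) p = 0

/-- tangential directions -/
def Tan {d : ℕ} (i0 : Fin d) (v : ℝ × (Fin d → ℝ)) : Prop := v.2 i0 = 0

theorem Sol.Dv {d : ℕ} {i0 : Fin d} {t0 : ℝ} {a : ℝ → Fin d → Fin d → ℝ}
    {u : ℝ × (Fin d → ℝ) → ℝ} (h : Sol i0 t0 a u) {v} (hv : Tan i0 v) : Sol i0 t0 a (Dv v u) := by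
  refine ⟨h.sm.Dv v, ?_⟩
  obtain ⟨τ, hτ, he⟩ := h.eq
  refine ⟨τ, hτ, fun p hp hpU => ?_⟩
  have hu := h.sm
  have e1 : _root_.Dv (et d) (_root_.Dv v u) = _root_.Dv v (_root_.Dv (et d) u) := Dv_comm hu _ _
  have e2 : ∀ j k, _root_.Dv (ex j) (_root_.Dv (ex k) (_root_.Dv v u)) =
      _root_.Dv v (_root_.Dv (ex j) (_root_.Dv (ex k) u)) := by
    intro j k
    rw [Dv_comm hu (ex k) v, Dv_comm (hu.Dv _) (ex j) v]
  simp_rw [e1, e2]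
  have l1 := hasLineDeriv (hu.Dv (et d)) v p
  have l2 := fun j k => hasLineDeriv ((hu.Dv (ex k)).Dv (ex j)) v p
  unfold HasLineDerivAt at l1 l2
  have l3 := l1.add (HasDerivAt.fun_sum fun j (_ : j ∈ Finset.univ) => HasDerivAt.fun_sum
    fun k (_ : k ∈ Finset.univ) => (l2 j k).const_mul (a (p.2 i0) j k))
  refine l3.unique ?_
  refine (hasDerivAt_const (0:ℝ) (0:ℝ)).congr_of_eventuallyEq ?_
  have hc : Continuous fun s : ℝ => p + s • v := by fun_prop
  have o1 : ∀ᶠ s in nhds (0:ℝ), p + s • v ∈ UU d :=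
    hc.continuousAt.eventually_mem ((isOpen_UU d).mem_nhds (by simpa using hpU))
  have o2 : ∀ᶠ s in nhds (0:ℝ), τ < (p + s • v).1 := by
    have : Continuous fun s : ℝ => (p + s • v).1 := by fun_prop
    exact this.continuousAt.eventually_mem (isOpen_Ioi.mem_nhds (by simpa using hp))
  filter_upwards [o1, o2] with s h1 h2
  have := he _ h2 h1
  have hv' : v.2 i0 = 0 := hv
  simpa [hv'] using this

def m1 {d : ℕ} (i0 j k : Fin d) : Fin d := if j = i0 then k else j
def m2 {d : ℕ} (i0 j k : Fin d) : Fin d := if j = i0 then j else k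

theorem m12 {d : ℕ} (i0 j k : Fin d) (ξ : Fin d → ℝ) :
    ξ (m1 i0 j k) * ξ (m2 i0 j k) = ξ j * ξ k := by
  unfold m1 m2
  split_ifs <;> ring

theorem cc_inv {d : ℕ} {δ : ℝ} {a : ℝ → Fin d → Fin d → ℝ} (h : Coef δ a) (i0 j k p) (s : ℝ) :
    cc i0 a j k (p + s • ex (m1 i0 j k)) = cc i0 a j k p := by
  by_cases hm : m1 i0 j k = i0
  · have hj : j = i0 := by
      by_contra hj
      simp [m1, hj] at hm
    have hk : k = i0 := by simpa [m1, hj] using hm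
    rw [hj, hk]
    have := h.pos
    have q : ∀ p, cc i0 a i0 i0 p = 1 :=
      fun p => div_self (by have := h.diag_lo (p.2 i0) i0; linarith)
    rw [q, q]
  · unfold cc ex
    simp [Ne.symm hm]

theorem int_mu {d : ℕ} {c F : ℝ × (Fin d → ℝ) → ℝ} (hc : Measurable c) {M : ℝ}
    (hM : ∀ p, |c p| ≤ M) (hF : Continuous F) (hs : HasCompactSupport F) (t0 : ℝ) :
    Integrable (fun p => c p * F p) (mu d t0) := (int_bdd hc hM hF hs).restrict

theorem int_mu' {d : ℕ} {F : ℝ × (Fin d → ℝ) → ℝ} (hF : Continuous F) (hs : HasCompactSupport F)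
    (t0 : ℝ) : Integrable F (mu d t0) := (hF.integrable_of_hasCompactSupport hs).restrict

theorem weak {d : ℕ} {i0 : Fin d} {t0 δ : ℝ} {a : ℝ → Fin d → Fin d → ℝ}
    {u : ℝ × (Fin d → ℝ) → ℝ} (hC : Coef δ a) (hu : Sol i0 t0 a u)
    {G : ℝ × (Fin d → ℝ) → ℝ} (hG : Sm G) (hGc : HasCompactSupport G) (hGU : tsupport G ⊆ UU d) :
    ∫ p, (bb i0 a p.2 * (G p * Dv (et d) u p) - ∑ j, ∑ k, cc i0 a j k p *
      (Dv (ex (m1 i0 j k)) G p * Dv (ex (m2 i0 j k)) u p)) ∂(mu d t0) = 0 := by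
  obtain ⟨τ, hτ, he⟩ := hu.eq
  have hus := hu.sm
  have step : ∫ p, (bb i0 a p.2 * (G p * Dv (et d) u p) - ∑ j, ∑ k, cc i0 a j k p *
      (Dv (ex (m1 i0 j k)) G p * Dv (ex (m2 i0 j k)) u p)) ∂(mu d t0) =
      ∫ p, - (∑ j, ∑ k, cc i0 a j k p *
        Dv (ex (m1 i0 j k)) (fun p => G p * Dv (ex (m2 i0 j k)) u p) p) ∂(mu d t0) := by
    refine setIntegral_congr_fun (ms d t0) fun p hp => ?_
    have hp' : τ < p.1 := hτ.trans hp
    have q : bb i0 a p.2 * (G p * Dv (et d) u p) =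
        - ∑ j, ∑ k, cc i0 a j k p * (G p * Dv (ex j) (Dv (ex k) u) p) := by
      by_cases hpG : p ∈ tsupport G
      · have := he p hp' (hGU hpG)
        have e : Dv (et d) u p = - ∑ j, ∑ k, a (p.2 i0) j k * Dv (ex j) (Dv (ex k) u) p := by
          linarith
        rw [e, mul_neg, mul_neg, Finset.mul_sum, Finset.mul_sum]
        congr 1
        refine Finset.sum_congr rfl fun j _ => ?_
        rw [Finset.mul_sum, Finset.mul_sum]
        refine Finset.sum_congr rfl fun k _ => ?_
        rw [show cc i0 a j k p = a (p.2 i0) j k * bb i0 a p.2 from rfl]; ring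
      · have := image_eq_zero_of_notMem_tsupport hpG
        simp [this]
    rw [q, ← neg_add', ← Finset.sum_add_distrib]
    congr 1
    refine Finset.sum_congr rfl fun j _ => ?_
    rw [← Finset.sum_add_distrib]
    refine Finset.sum_congr rfl fun k _ => ?_
    rw [Dv_mul hG (hus.Dv _)]
    have : Dv (ex j) (Dv (ex k) u) = Dv (ex (m1 i0 j k)) (Dv (ex (m2 i0 j k)) u) := by
      unfold m1 m2
      split_ifs
      · rw [Dv_comm hus]
      · rfl
    rw [this]
    simp only
    ring
  rw [step, integral_neg]
  have hcs : ∀ w : ℝ × (Fin d → ℝ) → ℝ, HasCompactSupport (fun p => G p * w p) :=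
    fun w => hGc.mul_right
  have ii : ∀ j k, Integrable (fun p => cc i0 a j k p *
        Dv (ex (m1 i0 j k)) (fun p => G p * Dv (ex (m2 i0 j k)) u p) p) (mu d t0) := fun j k =>
    int_mu (cc_meas hC i0 j k) (cc_abs hC i0 j k) ((hG.mul (hus.Dv _)).Dv _).cont
      (cs_Dv (hcs _) _) t0
  rw [integral_finsetSum _ (fun j _ => integrable_finsetSum _ fun k _ => ii j k)]
  rw [Finset.sum_eq_zero, neg_zero]
  intro j _
  rw [integral_finsetSum _ (fun k _ => ii j k)]
  refine Finset.sum_eq_zero fun k _ => ?_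
  rw [mu, ← integral_indicator (ms d t0)]
  have := int_line (c := Set.indicator {p : ℝ × (Fin d → ℝ) | t0 < p.1} (cc i0 a j k))
    (M := δ⁻¹ ^ 2)
    ((cc_meas hC i0 j k).indicator (ms d t0))
    (fun p => by
      by_cases h : p ∈ {p : ℝ × (Fin d → ℝ) | t0 < p.1}
      · rw [Set.indicator_of_mem h]; exact cc_abs hC _ _ _ _
      · rw [Set.indicator_of_notMem h]; simp [sq_nonneg])
    (ex (m1 i0 j k))
    (fun p s => by
      have : p + s • ex (m1 i0 j k) ∈ {p : ℝ × (Fin d → ℝ) | t0 < p.1} ↔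
        p ∈ {p : ℝ × (Fin d → ℝ) | t0 < p.1} := by simp [ex]
      by_cases h : p ∈ {p : ℝ × (Fin d → ℝ) | t0 < p.1}
      · rw [Set.indicator_of_mem h, Set.indicator_of_mem (this.2 h), cc_inv hC]
      · rw [Set.indicator_of_notMem h, Set.indicator_of_notMem (fun q => h (this.1 q))])
    (hG.mul (hus.Dv (ex (m2 i0 j k)))) (hcs _)
  rw [← this]
  congr 1
  funext p
  rw [← Set.indicator_mul_left]


theorem young {c M ε : ℝ} (hc : |c| ≤ M) (hε : 0 < ε) (x y : ℝ) :
    |c * (x * y)| ≤ ε * x ^ 2 + M ^ 2 / (4 * ε) * y ^ 2 := by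
  have h1 : |c * (x * y)| ≤ M * (|x| * |y|) := by
    rw [abs_mul, abs_mul]
    exact mul_le_mul_of_nonneg_right hc (by positivity)
  have h2 : M * (|x| * |y|) ≤ ε * |x| ^ 2 + M ^ 2 / (4 * ε) * |y| ^ 2 := by
    have e : ε * |x| ^ 2 + M ^ 2 / (4 * ε) * |y| ^ 2 - M * (|x| * |y|)
      = ε * (|x| - M / (2 * ε) * |y|) ^ 2 := by
      field_simp; ring
    have : 0 ≤ ε * (|x| - M / (2 * ε) * |y|) ^ 2 := by positivity
    linarith
  rw [sq_abs, sq_abs] at h2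
  linarith

theorem sum2_const {d : ℕ} (x : ℝ) : ∑ _j : Fin d, ∑ _k : Fin d, x = (d : ℝ) ^ 2 * x := by
  simp; ring

theorem single_le {d : ℕ} (ξ : Fin d → ℝ) (i) : ξ i ^ 2 ≤ ∑ j, ξ j ^ 2 :=
  Finset.single_le_sum (f := fun j => ξ j ^ 2) (fun _ _ => sq_nonneg _) (Finset.mem_univ i)

theorem alg1 {d : ℕ} (i0 : Fin d) {c : Fin d → Fin d → ℝ} {M l ε : ℝ} (hM : ∀ j k, |c j k| ≤ M)
    (hε : 0 < ε) (hd : (d : ℝ) ^ 2 * ε ≤ l / 2) (ξ z : Fin d → ℝ)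
    (hl : l * ∑ j, ξ j ^ 2 ≤ ∑ j, ∑ k, c j k * ξ j * ξ k) (q u : ℝ) :
    - ∑ j, ∑ k, c j k * ((2 * q * z (m1 i0 j k) * u + q ^ 2 * ξ (m1 i0 j k)) * ξ (m2 i0 j k)) ≤
      - (l / 2) * (q ^ 2 * ∑ j, ξ j ^ 2) + (d : ℝ) ^ 2 * (M ^ 2 / ε) * ((∑ j, z j ^ 2) * u ^ 2) := by
  have h1 : ∀ j k, - (c j k * ((2 * q * z (m1 i0 j k) * u + q ^ 2 * ξ (m1 i0 j k)) *
      ξ (m2 i0 j k))) ≤ - (q ^ 2 * (c j k * ξ j * ξ k)) + (ε * (q ^ 2 * ∑ j, ξ j ^ 2)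
       + M ^ 2 / ε * ((∑ j, z j ^ 2) * u ^ 2)) := by
    intro j k
    have y := (abs_le.1 (young (hM j k) hε (q * ξ (m2 i0 j k)) (2 * (z (m1 i0 j k) * u)))).1
    have e := m12 i0 j k ξ
    have s1 := mul_le_mul_of_nonneg_left (single_le ξ (m2 i0 j k)) (sq_nonneg q)
    have s2 := mul_le_mul_of_nonneg_right (single_le z (m1 i0 j k)) (sq_nonneg u)
    have s1' := mul_le_mul_of_nonneg_left s1 hε.le
    have hh : 0 ≤ M ^ 2 / ε := by positivity
    have s2' := mul_le_mul_of_nonneg_left s2 hh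
    have e2 : M ^ 2 / (4 * ε) * (2 * (z (m1 i0 j k) * u)) ^ 2 =
      M ^ 2 / ε * (z (m1 i0 j k) ^ 2 * u ^ 2) := by field_simp; ring
    have e3 : c j k * ((2 * q * z (m1 i0 j k) * u + q ^ 2 * ξ (m1 i0 j k)) * ξ (m2 i0 j k)) =
      c j k * (q * ξ (m2 i0 j k) * (2 * (z (m1 i0 j k) * u))) + q ^ 2 * (c j k * ξ j * ξ k) := by
      rw [mul_assoc (c j k) (ξ j), ← e]; ring
    rw [e3]
    rw [e2] at y
    have e4 : ε * (q * ξ (m2 i0 j k)) ^ 2 = ε * (q ^ 2 * ξ (m2 i0 j k) ^ 2) := by ring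
    linarith
  rw [← Finset.sum_neg_distrib]
  simp_rw [← Finset.sum_neg_distrib]
  refine (Finset.sum_le_sum fun j _ => Finset.sum_le_sum fun k _ => h1 j k).trans ?_
  simp_rw [Finset.sum_add_distrib, Finset.sum_neg_distrib, ← Finset.mul_sum]
  simp only [Finset.sum_const, Finset.card_univ, Fintype.card_fin, nsmul_eq_mul]
  have hq := mul_le_mul_of_nonneg_left hl (sq_nonneg q)
  have hS : 0 ≤ q ^ 2 * ∑ j, ξ j ^ 2 :=
    mul_nonneg (sq_nonneg q) (Finset.sum_nonneg fun _ _ => sq_nonneg _)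
  have := mul_le_mul_of_nonneg_right hd hS
  nlinarith

theorem cs_of {d : ℕ} {ψ F : ℝ × (Fin d → ℝ) → ℝ} (h : HasCompactSupport ψ)
    (hF : ∀ p, ψ p = 0 → (∀ v, Dv v ψ p = 0) → F p = 0) : HasCompactSupport F :=
  HasCompactSupport.intro h fun p hp => hF p (image_eq_zero_of_notMem_tsupport hp)
    fun v => image_eq_zero_of_notMem_tsupport (fun q => hp (tsupport_Dv ψ v q))

theorem lin3 {X : Type*} [MeasurableSpace X] {μ : Measure X} {f g h : X → ℝ}
    (hf : Integrable f μ) (hg : Integrable g μ) (hh : Integrable h μ) (x y z : ℝ) :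
    ∫ p, (x * f p + (y * g p - z * h p)) ∂μ =
      x * ∫ p, f p ∂μ + (y * ∫ p, g p ∂μ - z * ∫ p, h p ∂μ) := by
  have i2 : Integrable (fun p => y * g p - z * h p) μ := (hg.const_mul y).sub (hh.const_mul z)
  rw [integral_add (hf.const_mul x) i2,
    integral_sub (hg.const_mul y) (hh.const_mul z), integral_const_mul, integral_const_mul,
    integral_const_mul]

theorem cacc (d : ℕ) (δ : ℝ) (hδ : 0 < δ) : ∃ C : ℝ, 0 ≤ C ∧ ∀ (i0 : Fin d) (t0 : ℝ)
    (a : ℝ → Fin d → Fin d → ℝ) (u ψ : ℝ × (Fin d → ℝ) → ℝ), Coef δ a → Sol i0 t0 a u →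
    Sm ψ → HasCompactSupport ψ → tsupport ψ ⊆ UU d →
    ∫ p, ψ p ^ 2 * ∑ i, Dv (ex i) u p ^ 2 ∂(mu d t0) ≤
      C * ∫ p, (|ψ p * Dv (et d) ψ p| + ∑ i, Dv (ex i) ψ p ^ 2) * u p ^ 2 ∂(mu d t0) := by
  set ε := δ ^ 2 / (2 * ((d : ℝ) ^ 2 + 1)) with hε
  have εpos : 0 < ε := by positivity
  have hd : (d : ℝ) ^ 2 * ε ≤ δ ^ 2 / 2 := by
    rw [hε, mul_div_assoc', div_le_div_iff₀ (by positivity) (by positivity)]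
    nlinarith [sq_nonneg (d : ℝ), sq_nonneg δ]
  set C1 := δ⁻¹ + (d : ℝ) ^ 2 * ((δ⁻¹ ^ 2) ^ 2 / ε) with hC1
  have C1pos : 0 ≤ C1 := by positivity
  refine ⟨2 / δ ^ 2 * C1, by positivity, ?_⟩
  intro i0 t0 a u ψ hC hu hψ hψc hψU
  have hus := hu.sm
  have cu : Continuous u := hus.cont
  have cψ : Continuous ψ := hψ.cont
  have cDu : ∀ v, Continuous (Dv v u) := fun v => (hus.Dv v).cont
  have cDψ : ∀ v, Continuous (Dv v ψ) := fun v => (hψ.Dv v).cont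
  have hG : Sm (fun p => ψ p ^ 2 * u p) := (hψ.pow 2).mul hus
  have hGc : HasCompactSupport (fun p => ψ p ^ 2 * u p) := cs_of hψc (by intro p h _; simp [h])
  have hGU : tsupport (fun p => ψ p ^ 2 * u p) ⊆ UU d := by
    refine (closure_minimal ?_ (isClosed_tsupport ψ)).trans hψU
    intro p hp
    apply subset_tsupport
    intro h; apply hp; simp [h]
  have DG : ∀ v, Dv v (fun p => ψ p ^ 2 * u p) =
      fun p => 2 * ψ p * Dv v ψ p * u p + ψ p ^ 2 * Dv v u p := by
    intro v; rw [Dv_mul (hψ.pow 2) hus, Dv_sq hψ]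
  have W := weak hC hu hG hGc hGU
  have hF : Sm (fun p => (ψ p * u p) ^ 2) := (hψ.mul hus).pow 2
  have hFc : HasCompactSupport (fun p => (ψ p * u p) ^ 2) := cs_of hψc (by intro p h _; simp [h])
  have DF : Dv (et d) (fun p => (ψ p * u p) ^ 2) =
      fun p => 2 * (ψ p * Dv (et d) ψ p) * u p ^ 2 + 2 * (ψ p ^ 2 * u p * Dv (et d) u p) := by
    rw [Dv_sq (hψ.mul hus), Dv_mul hψ hus]; funext p; ring
  have tim := int_time (bb_meas hC i0) (bb_abs hC i0) (fun x => hδ.le.trans (bb_lo hC i0 x)) hF hFc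
    (fun p => sq_nonneg _) t0
  change ∫ p, _ ∂(mu d t0) ≤ 0 at tim
  have iT : Integrable (fun p => bb i0 a p.2 * Dv (et d) (fun p => (ψ p * u p) ^ 2) p) (mu d t0) :=
    int_mu (c := fun p => bb i0 a p.2) ((bb_meas hC i0).comp measurable_snd) (fun p => bb_abs hC i0 p.2)
      (hF.Dv _).cont (cs_Dv hFc _) t0
  have iA : Integrable (fun p => (|ψ p * Dv (et d) ψ p| + ∑ i, Dv (ex i) ψ p ^ 2) * u p ^ 2)
      (mu d t0) := int_mu' (by fun_prop) (cs_of hψc (by intro p h h'; simp [h, h'])) t0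
  have iB : Integrable (fun p => ψ p ^ 2 * ∑ i, Dv (ex i) u p ^ 2)
      (mu d t0) := int_mu' (by fun_prop) (cs_of hψc (by intro p h h'; simp [h])) t0
  have iW : Integrable (fun p => bb i0 a p.2 * ((ψ p ^ 2 * u p) * Dv (et d) u p) -
      ∑ j, ∑ k, cc i0 a j k p *
      (Dv (ex (m1 i0 j k)) (fun p => ψ p ^ 2 * u p) p * Dv (ex (m2 i0 j k)) u p)) (mu d t0) := by
    refine Integrable.sub ?_ (integrable_finsetSum _ fun j _ => integrable_finsetSum _ fun k _ => ?_)
    · exact int_mu (c := fun p => bb i0 a p.2) ((bb_meas hC i0).comp measurable_snd)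
        (fun p => bb_abs hC i0 p.2) (by fun_prop) (cs_of hψc (by intro p h _; simp [h])) t0
    · refine int_mu (cc_meas hC i0 j k) (cc_abs hC i0 j k) (((hG.Dv _).mul (hus.Dv _)).cont) ?_ t0
      exact (cs_Dv hGc _).mul_right
  have mono := integral_mono (g := fun p => 1 / 2 * (bb i0 a p.2 * Dv (et d) (fun p => (ψ p * u p) ^ 2) p)
    + (C1 * ((|ψ p * Dv (et d) ψ p| + ∑ i, Dv (ex i) ψ p ^ 2) * u p ^ 2)
      - δ ^ 2 / 2 * (ψ p ^ 2 * ∑ i, Dv (ex i) u p ^ 2))) iW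
    ((iT.const_mul _).add ((iA.const_mul _).sub (iB.const_mul _))) (by
      intro p
      simp only [DG, DF]
      have h1 := alg1 i0 (c := fun j k => cc i0 a j k p) (fun j k => cc_abs hC i0 j k p) εpos hd
        (fun j => Dv (ex j) u p) (fun j => Dv (ex j) ψ p) (cc_ell hC i0 p _) (ψ p) (u p)
      have h2 : - (bb i0 a p.2 * ((ψ p * Dv (et d) ψ p) * u p ^ 2)) ≤
          δ⁻¹ * (|ψ p * Dv (et d) ψ p| * u p ^ 2) := by
        have b1 := bb_abs hC i0 p.2
        refine (neg_le_abs _).trans ?_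
        rw [abs_mul, abs_mul, abs_of_nonneg (sq_nonneg (u p))]
        exact mul_le_mul_of_nonneg_right b1 (by positivity)
      have h3 : 0 ≤ δ⁻¹ * ((∑ i, Dv (ex i) ψ p ^ 2) * u p ^ 2) := by positivity
      have h4 : 0 ≤ (d : ℝ) ^ 2 * ((δ⁻¹ ^ 2) ^ 2 / ε) * (|ψ p * Dv (et d) ψ p| * u p ^ 2) := by
        positivity
      rw [hC1]
      linarith)
  rw [W, lin3 iT iA iB] at mono
  have fin : δ ^ 2 / 2 * ∫ p, ψ p ^ 2 * ∑ i, Dv (ex i) u p ^ 2 ∂(mu d t0) ≤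
    C1 * ∫ p, (|ψ p * Dv (et d) ψ p| + ∑ i, Dv (ex i) ψ p ^ 2) * u p ^ 2 ∂(mu d t0) := by
    linarith
  rw [mul_assoc, div_mul_eq_mul_div, le_div_iff₀ (by positivity)]
  linarith

theorem bdd_of {d : ℕ} {f : ℝ × (Fin d → ℝ) → ℝ} (hf : Continuous f) (hc : HasCompactSupport f) :
    ∃ M : ℝ, 0 ≤ M ∧ ∀ p, |f p| ≤ M := by
  obtain ⟨M, hM⟩ := hf.bounded_above_of_compact_support hc
  exact ⟨M, (norm_nonneg _).trans (hM 0), hM⟩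


theorem alg2 {d : ℕ} (i0 : Fin d) {c : Fin d → Fin d → ℝ} {M ε Z : ℝ} (hM : ∀ j k, |c j k| ≤ M)
    (hε : 0 < ε) (ξ z y : Fin d → ℝ) (hZ : ∀ i, |z i| ≤ Z) (e w : ℝ) :
    ∑ j, ∑ k, c j k * ((2 * e * z (m1 i0 j k) * w + e ^ 2 * y (m1 i0 j k)) * ξ (m2 i0 j k)) ≤
      (d : ℝ) ^ 2 * ε * ((e ^ 2) ^ 2 * ∑ j, y j ^ 2) + (d : ℝ) ^ 2 * ε * (e ^ 2 * w ^ 2) +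
      (d : ℝ) ^ 2 * (M ^ 2 / (4 * ε) + M ^ 2 / ε * Z ^ 2) * ∑ j, ξ j ^ 2 := by
  have h1 : ∀ j k, c j k * ((2 * e * z (m1 i0 j k) * w + e ^ 2 * y (m1 i0 j k)) *
      ξ (m2 i0 j k)) ≤ ε * ((e ^ 2) ^ 2 * ∑ j, y j ^ 2) + ε * (e ^ 2 * w ^ 2) +
      (M ^ 2 / (4 * ε) + M ^ 2 / ε * Z ^ 2) * ∑ j, ξ j ^ 2 := by
    intro j k
    have y1 := (abs_le.1 (young (hM j k) hε (e ^ 2 * y (m1 i0 j k)) (ξ (m2 i0 j k)))).2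
    have y2 := (abs_le.1 (young (hM j k) hε (e * w) (2 * (z (m1 i0 j k) * ξ (m2 i0 j k))))).2
    have e1 : M ^ 2 / (4 * ε) * (2 * (z (m1 i0 j k) * ξ (m2 i0 j k))) ^ 2 =
      M ^ 2 / ε * (z (m1 i0 j k) ^ 2 * ξ (m2 i0 j k) ^ 2) := by field_simp; ring
    rw [e1] at y2
    have hz : z (m1 i0 j k) ^ 2 ≤ Z ^ 2 := sq_le_sq' (abs_le.1 (hZ _)).1 (abs_le.1 (hZ _)).2
    have s0 : z (m1 i0 j k) ^ 2 * ξ (m2 i0 j k) ^ 2 ≤ Z ^ 2 * ∑ j, ξ j ^ 2 :=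
      mul_le_mul hz (single_le ξ _) (sq_nonneg _) (sq_nonneg _)
    have hh : 0 ≤ M ^ 2 / ε := by positivity
    have hh' : 0 ≤ M ^ 2 / (4 * ε) := by positivity
    have s1 := mul_le_mul_of_nonneg_left s0 hh
    have s2 := mul_le_mul_of_nonneg_left (single_le ξ (m2 i0 j k)) hh'
    have s3 := mul_le_mul_of_nonneg_left (single_le y (m1 i0 j k)) (sq_nonneg (e ^ 2))
    have s4 := mul_le_mul_of_nonneg_left s3 hε.le
    linarith
  refine (Finset.sum_le_sum fun j _ => Finset.sum_le_sum fun k _ => h1 j k).trans ?_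
  rw [sum2_const]
  apply le_of_eq; ring

theorem ion {d : ℕ} {F : ℝ × (Fin d → ℝ) → ℝ} (hF : Continuous F) {K} (hK : IsCompact K)
    (t0 : ℝ) : IntegrableOn F K (mu d t0) := by
  have : IntegrableOn F K := hF.continuousOn.integrableOn_compact hK
  exact Integrable.mono_measure this (Measure.restrict_mono le_rfl Measure.restrict_le_self)

theorem tan_et {d : ℕ} (i0 : Fin d) : Tan i0 (et d) := rfl

theorem tder {d : ℕ} {δ : ℝ} (hδ : 0 < δ) {η : ℝ × (Fin d → ℝ) → ℝ} (hη : Sm η)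
    (hηc : HasCompactSupport η) (hηU : tsupport η ⊆ UU d) :
    ∃ C : ℝ, 0 ≤ C ∧ ∀ (i0 : Fin d) (t0 : ℝ)
    (a : ℝ → Fin d → Fin d → ℝ) (u : ℝ × (Fin d → ℝ) → ℝ), Coef δ a → Sol i0 t0 a u →
    ∫ p, η p ^ 2 * Dv (et d) u p ^ 2 ∂(mu d t0) ≤
      C * ∫ p in tsupport η, ∑ i, Dv (ex i) u p ^ 2 ∂(mu d t0) := by
  obtain ⟨C0, hC0, cac⟩ := cacc d δ hδ
  have cη : Continuous η := hη.cont
  have cDη : ∀ v, Continuous (Dv v η) := fun v => (hη.Dv v).cont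
  -- bounds
  obtain ⟨Z, hZ0, hZ⟩ : ∃ Z : ℝ, 0 ≤ Z ∧ ∀ (i : Fin d) p, |Dv (ex i) η p| ≤ Z := by
    choose M hM0 hM using fun i : Fin d => bdd_of (cDη (ex i)) (cs_Dv hηc (ex i))
    refine ⟨∑ i, M i, Finset.sum_nonneg fun i _ => hM0 i, fun i p => (hM i p).trans ?_⟩
    exact Finset.single_le_sum (f := M) (fun i _ => hM0 i) (Finset.mem_univ i)
  obtain ⟨B1, hB10, hB1⟩ := bdd_of (f := fun p => 2 * η p * Dv (et d) η p) (by fun_prop)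
    (cs_of hηc (by intro p h h'; simp [h]))
  set B' := B1 + 4 * ((d : ℝ) * Z ^ 2) with hB'
  have hB'0 : 0 ≤ B' := by positivity
  set ε := δ / (2 * ((d : ℝ) ^ 2 * (C0 * B' + 1) + 1)) with hε
  have εpos : 0 < ε := by positivity
  have hn : (d : ℝ) ^ 2 * ε * (C0 * B' + 1) ≤ δ / 2 := by
    have e : (d : ℝ) ^ 2 * ε * (C0 * B' + 1) = ((d : ℝ) ^ 2 * (C0 * B' + 1)) * δ /
      (2 * ((d : ℝ) ^ 2 * (C0 * B' + 1) + 1)) := by rw [hε]; ring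
    have : 0 ≤ (d : ℝ) ^ 2 * (C0 * B' + 1) := by positivity
    rw [e, div_le_div_iff₀ (by positivity) (by positivity)]
    nlinarith
  set C2 := (d : ℝ) ^ 2 * ((δ⁻¹ ^ 2) ^ 2 / (4 * ε) + (δ⁻¹ ^ 2) ^ 2 / ε * Z ^ 2) with hC2
  have hC20 : 0 ≤ C2 := by positivity
  refine ⟨2 / δ * C2, by positivity, ?_⟩
  intro i0 t0 a u hC hu
  have hus := hu.sm
  have hw := hu.Dv (tan_et i0)
  set w := Dv (et d) u with hwdef
  have hws : Sm w := hw.sm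
  have cw : Continuous w := hws.cont
  have cDu : ∀ v, Continuous (Dv v u) := fun v => (hus.Dv v).cont
  have cDw : ∀ v, Continuous (Dv v w) := fun v => (hws.Dv v).cont
  have hG : Sm (fun p => η p ^ 2 * w p) := (hη.pow 2).mul hws
  have hGc : HasCompactSupport (fun p => η p ^ 2 * w p) := cs_of hηc (by intro p h _; simp [h])
  have sub : ∀ F : ℝ × (Fin d → ℝ) → ℝ, tsupport (fun p => η p ^ 2 * F p) ⊆ tsupport η := by
    intro F
    refine (closure_minimal ?_ (isClosed_tsupport η))
    intro p hp
    apply subset_tsupport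
    intro h; apply hp; simp [h]
  have DG : ∀ v, Dv v (fun p => η p ^ 2 * w p) =
      fun p => 2 * η p * Dv v η p * w p + η p ^ 2 * Dv v w p := by
    intro v; rw [Dv_mul (hη.pow 2) hws, Dv_sq hη]
  have W := weak hC hu hG hGc ((sub _).trans hηU)
  -- Caccioppoli for w
  have s2 : Sm (fun p => η p ^ 2) := hη.pow 2
  have cw2 := cac i0 t0 a w (fun p => η p ^ 2) hC hw s2 (cs_of hηc (by intro p h _; simp [h]))
    ((by simpa using sub (fun _ => 1) : tsupport (fun p => η p ^ 2) ⊆ tsupport η).trans hηU)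
  have iX : Integrable (fun p => (η p ^ 2) ^ 2 * ∑ i, Dv (ex i) w p ^ 2) (mu d t0) :=
    int_mu' (by fun_prop) (cs_of hηc (by intro p h h'; simp [h])) t0
  have iY : Integrable (fun p => η p ^ 2 * w p ^ 2) (mu d t0) :=
    int_mu' (by fun_prop) (cs_of hηc (by intro p h h'; simp [h])) t0
  have iV : Integrable (Set.indicator (tsupport η) (fun p => ∑ i, Dv (ex i) u p ^ 2)) (mu d t0) :=
    (ion (by fun_prop) hηc t0).integrable_indicator (isClosed_tsupport η).measurableSet
  have cw3 : ∫ p, (η p ^ 2) ^ 2 * ∑ i, Dv (ex i) w p ^ 2 ∂(mu d t0) ≤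
      C0 * (B' * ∫ p, η p ^ 2 * w p ^ 2 ∂(mu d t0)) := by
    refine cw2.trans (mul_le_mul_of_nonneg_left ?_ hC0)
    rw [← integral_const_mul]
    refine integral_mono (int_mu' ?_ (cs_of hηc ?_) t0) (iY.const_mul _) ?_
    · have : ∀ v, Continuous (Dv v fun p => η p ^ 2) := fun v => (s2.Dv v).cont
      fun_prop
    · intro p h h'; simp [Dv_sq hη, h]
    · intro p
      simp only [Dv_sq hη]
      suffices h : (|η p ^ 2 * (2 * η p * Dv (et d) η p)| + ∑ i, (2 * η p * Dv (ex i) η p) ^ 2)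
          ≤ B' * η p ^ 2 by
        have := mul_le_mul_of_nonneg_right h (sq_nonneg (w p))
        linarith
      have h1 := hB1 p
      have h2 : ∑ i, (2 * η p * Dv (ex i) η p) ^ 2 ≤ ∑ _i : Fin d, 4 * η p ^ 2 * Z ^ 2 := by
        refine Finset.sum_le_sum fun i _ => ?_
        have : Dv (ex i) η p ^ 2 ≤ Z ^ 2 :=
          sq_le_sq' (abs_le.1 (hZ i p)).1 (abs_le.1 (hZ i p)).2
        nlinarith [sq_nonneg (η p)]
      simp only [Finset.sum_const, Finset.card_univ, Fintype.card_fin, nsmul_eq_mul] at h2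
      have h3 : |η p ^ 2 * (2 * η p * Dv (et d) η p)| ≤ η p ^ 2 * B1 := by
        rw [abs_mul, abs_of_nonneg (sq_nonneg (η p))]
        exact mul_le_mul_of_nonneg_left h1 (sq_nonneg _)
      rw [hB']
      linarith
  have iW : Integrable (fun p => bb i0 a p.2 * ((η p ^ 2 * w p) * w p) -
      ∑ j, ∑ k, cc i0 a j k p *
      (Dv (ex (m1 i0 j k)) (fun p => η p ^ 2 * w p) p * Dv (ex (m2 i0 j k)) u p)) (mu d t0) := by
    refine Integrable.sub ?_ (integrable_finsetSum _ fun j _ => integrable_finsetSum _ fun k _ => ?_)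
    · exact int_mu (c := fun p => bb i0 a p.2) ((bb_meas hC i0).comp measurable_snd)
        (fun p => bb_abs hC i0 p.2) (by fun_prop) (cs_of hηc (by intro p h _; simp [h])) t0
    · refine int_mu (cc_meas hC i0 j k) (cc_abs hC i0 j k) (((hG.Dv _).mul (hus.Dv _)).cont) ?_ t0
      exact (cs_Dv hGc _).mul_right
  have mono := integral_mono (f := fun p => (δ - (d : ℝ) ^ 2 * ε) * (η p ^ 2 * w p ^ 2) +
      ((-((d : ℝ) ^ 2 * ε)) * ((η p ^ 2) ^ 2 * ∑ i, Dv (ex i) w p ^ 2) - C2 *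
        Set.indicator (tsupport η) (fun p => ∑ i, Dv (ex i) u p ^ 2) p))
    ((iY.const_mul _).add ((iX.const_mul _).sub (iV.const_mul _))) iW (by
      intro p
      simp only [DG]
      by_cases hp : p ∈ tsupport η
      · rw [Set.indicator_of_mem hp]
        have h1 := alg2 i0 (c := fun j k => cc i0 a j k p) (fun j k => cc_abs hC i0 j k p) εpos
          (fun j => Dv (ex j) u p) (fun j => Dv (ex j) η p) (fun j => Dv (ex j) w p)
          (fun j => hZ j p) (η p) (w p)
        have h2 : δ * (η p ^ 2 * w p ^ 2) ≤ bb i0 a p.2 * (η p ^ 2 * w p * w p) := by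
          rw [mul_assoc (η p ^ 2), ← sq (w p)]
          exact mul_le_mul_of_nonneg_right (bb_lo hC i0 p.2) (by positivity)
        linarith
      · rw [Set.indicator_of_notMem hp]
        have h0 := image_eq_zero_of_notMem_tsupport hp
        simp [h0])
  rw [W, lin3 iY iX iV, integral_indicator (isClosed_tsupport η).measurableSet] at mono
  set Y := ∫ p, η p ^ 2 * w p ^ 2 ∂(mu d t0)
  have hY : 0 ≤ Y := integral_nonneg fun p => by positivity
  have k1 : (d : ℝ) ^ 2 * ε * (∫ p, (η p ^ 2) ^ 2 * ∑ i, Dv (ex i) w p ^ 2 ∂(mu d t0)) ≤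
    (d : ℝ) ^ 2 * ε * (C0 * (B' * Y)) := mul_le_mul_of_nonneg_left cw3 (by positivity)
  have k2 := mul_le_mul_of_nonneg_right hn hY
  have fin : δ / 2 * Y ≤ C2 * ∫ p in tsupport η, ∑ i, Dv (ex i) u p ^ 2 ∂(mu d t0) := by
    linarith
  rw [mul_assoc, div_mul_eq_mul_div, le_div_iff₀ (by positivity)]
  linarith


/-- functionals controlled by local L2 norms of the solution -/
def Bd {d : ℕ} (δ : ℝ) (i0 : Fin d) (Φ : ℝ → (ℝ × (Fin d → ℝ) → ℝ) → ℝ) : Prop :=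
  ∃ C : ℝ, 0 ≤ C ∧ ∃ K : Set (ℝ × (Fin d → ℝ)), IsCompact K ∧ K ⊆ UU d ∧
    ∀ t0 a u, Coef δ a → Sol i0 t0 a u → Φ t0 u ≤ C * ∫ p in K, u p ^ 2 ∂(mu d t0)

theorem Bd.mono {d : ℕ} {δ : ℝ} {i0 : Fin d} {Φ Ψ : ℝ → (ℝ × (Fin d → ℝ) → ℝ) → ℝ}
    (h : Bd δ i0 Ψ) (hl : ∀ t0 a u, Coef δ a → Sol i0 t0 a u → Φ t0 u ≤ Ψ t0 u) : Bd δ i0 Φ := by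
  obtain ⟨C, hC, K, hK, hKU, H⟩ := h
  exact ⟨C, hC, K, hK, hKU, fun t0 a u h1 h2 => (hl t0 a u h1 h2).trans (H t0 a u h1 h2)⟩

theorem Bd.const_mul {d : ℕ} {δ : ℝ} {i0 : Fin d} {Φ : ℝ → (ℝ × (Fin d → ℝ) → ℝ) → ℝ}
    (h : Bd δ i0 Φ) {x : ℝ} (hx : 0 ≤ x) : Bd δ i0 (fun t0 u => x * Φ t0 u) := by
  obtain ⟨C, hC, K, hK, hKU, H⟩ := h
  refine ⟨x * C, by positivity, K, hK, hKU, fun t0 a u h1 h2 => ?_⟩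
  rw [mul_assoc]
  exact mul_le_mul_of_nonneg_left (H t0 a u h1 h2) hx

theorem K_mono {d : ℕ} {F : ℝ × (Fin d → ℝ) → ℝ} (hF : Continuous F) {K K'} (hK : IsCompact K')
    (h : K ⊆ K') (t0 : ℝ) : ∫ p in K, F p ^ 2 ∂(mu d t0) ≤ ∫ p in K', F p ^ 2 ∂(mu d t0) :=
  setIntegral_mono_set (ion (F := fun p => F p ^ 2) (by fun_prop) hK t0)
    (Filter.Eventually.of_forall fun p => sq_nonneg (F p)) (Filter.Eventually.of_forall h)

theorem Bd.add {d : ℕ} {δ : ℝ} {i0 : Fin d} {Φ Ψ : ℝ → (ℝ × (Fin d → ℝ) → ℝ) → ℝ}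
    (h : Bd δ i0 Φ) (h' : Bd δ i0 Ψ) : Bd δ i0 (fun t0 u => Φ t0 u + Ψ t0 u) := by
  obtain ⟨C, hC, K, hK, hKU, H⟩ := h
  obtain ⟨C', hC', K', hK', hKU', H'⟩ := h'
  refine ⟨C + C', by positivity, K ∪ K', hK.union hK', Set.union_subset hKU hKU',
    fun t0 a u h1 h2 => ?_⟩
  have k1 := mul_le_mul_of_nonneg_left (K_mono h2.sm.cont (hK.union hK') Set.subset_union_left t0) hC
  have k2 := mul_le_mul_of_nonneg_left (K_mono h2.sm.cont (hK.union hK') Set.subset_union_right t0) hC'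
  have := H t0 a u h1 h2
  have := H' t0 a u h1 h2
  rw [add_mul]
  linarith

theorem Bd.sum {d : ℕ} {δ : ℝ} {i0 : Fin d} {ι : Type*} (s : Finset ι)
    {Φ : ι → ℝ → (ℝ × (Fin d → ℝ) → ℝ) → ℝ}
    (h : ∀ i, Bd δ i0 (Φ i)) : Bd δ i0 (fun t0 u => ∑ i ∈ s, Φ i t0 u) := by
  classical
  induction s using Finset.induction_on with
  | empty => exact ⟨0, le_rfl, ∅, isCompact_empty, Set.empty_subset _, fun _ _ _ _ _ => by simp⟩
  | insert i s hi ih =>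
    simp_rw [Finset.sum_insert hi]
    exact (h i).add ih

def Ctrl {d : ℕ} (δ : ℝ) (i0 : Fin d)
    (T : (ℝ × (Fin d → ℝ) → ℝ) → (ℝ × (Fin d → ℝ) → ℝ)) : Prop :=
  ∀ K, IsCompact K → K ⊆ UU d → Bd δ i0 (fun t0 u => ∫ p in K, T u p ^ 2 ∂(mu d t0))

theorem Bd.comp {d : ℕ} {δ : ℝ} {i0 : Fin d} {Φ : ℝ → (ℝ × (Fin d → ℝ) → ℝ) → ℝ}
    {S : (ℝ × (Fin d → ℝ) → ℝ) → (ℝ × (Fin d → ℝ) → ℝ)} (h : Bd δ i0 Φ) (hS : Ctrl δ i0 S)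
    (hs : ∀ t0 a u, Sol i0 t0 a u → Sol i0 t0 a (S u)) : Bd δ i0 (fun t0 u => Φ t0 (S u)) := by
  obtain ⟨C, hC, K, hK, hKU, H⟩ := h
  exact ((hS K hK hKU).const_mul hC).mono fun t0 a u h1 h2 => H t0 a (S u) h1 (hs _ _ _ h2)

theorem ctrl_id {d : ℕ} (δ : ℝ) (i0 : Fin d) : Ctrl δ i0 (fun u => u) :=
  fun K hK hKU => ⟨1, zero_le_one, K, hK, hKU, fun t0 a u _ _ => by simp⟩

/-- bound a set integral by a cutoff integral -/
theorem K_cut {d : ℕ} {η F : ℝ × (Fin d → ℝ) → ℝ} (hη : Sm η) (hc : HasCompactSupport η) {K}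
    (hK : IsCompact K) (h1 : ∀ p ∈ K, η p = 1) (hF : Continuous F) (hF0 : ∀ p, 0 ≤ F p) (t0 : ℝ) :
    ∫ p in K, F p ∂(mu d t0) ≤ ∫ p, η p ^ 2 * F p ∂(mu d t0) := by
  have cη := hη.cont
  have : ∫ p in K, F p ∂(mu d t0) = ∫ p in K, η p ^ 2 * F p ∂(mu d t0) :=
    setIntegral_congr_fun hK.measurableSet fun p hp => by simp [h1 p hp]
  rw [this]
  refine setIntegral_le_integral (int_mu' (by fun_prop) (cs_of hc (by intro p h _; simp [h])) t0) ?_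
  exact Filter.Eventually.of_forall fun p => mul_nonneg (sq_nonneg _) (hF0 p)

theorem ctrl_grad {d : ℕ} {δ : ℝ} (hδ : 0 < δ) (i0 : Fin d) {K} (hK : IsCompact K)
    (hKU : K ⊆ UU d) : Bd δ i0 (fun t0 u => ∫ p in K, ∑ i, Dv (ex i) u p ^ 2 ∂(mu d t0)) := by
  obtain ⟨η, hη, hc, hU, h0, hl, h1⟩ := cutoff hK (isOpen_UU d) hKU
  obtain ⟨C, hC, H⟩ := cacc d δ hδ
  have cη : Continuous η := hη.cont
  have cDη : ∀ v, Continuous (Dv v η) := fun v => (hη.Dv v).cont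
  obtain ⟨B, hB0, hB⟩ := bdd_of (f := fun p => |η p * Dv (et d) η p| +
      ∑ i, Dv (ex i) η p ^ 2) (by fun_prop) (cs_of hc (by intro p h h'; simp [h, h']))
  refine ⟨C * B, by positivity, tsupport η, hc, hU, fun t0 a u hCo hu => ?_⟩
  have cu := hu.sm.cont
  have cDu : ∀ v, Continuous (Dv v u) := fun v => (hu.sm.Dv v).cont
  refine (K_cut hη hc hK h1 (by fun_prop) (fun p => by positivity) t0).trans ?_
  refine (H i0 t0 a u η hCo hu hη hc hU).trans ?_
  rw [mul_assoc]
  refine mul_le_mul_of_nonneg_left ?_ hC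
  rw [← integral_const_mul, ← integral_indicator (isClosed_tsupport η).measurableSet]
  refine integral_mono (int_mu' (by fun_prop) (cs_of hc (by intro p h h'; simp [h, h'])) t0) ?_ ?_
  · exact (ion (by fun_prop) hc t0).integrable_indicator (isClosed_tsupport η).measurableSet
  · intro p
    simp only
    by_cases hp : p ∈ tsupport η
    · rw [Set.indicator_of_mem hp]
      exact mul_le_mul_of_nonneg_right ((le_abs_self _).trans (hB p)) (sq_nonneg _)
    · rw [Set.indicator_of_notMem hp]
      have h0 : ∀ v, Dv v η p = 0 :=
        fun v => image_eq_zero_of_notMem_tsupport (fun q => hp (tsupport_Dv η v q))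
      simp [h0]

theorem ctrl_ex {d : ℕ} {δ : ℝ} (hδ : 0 < δ) (i0 i : Fin d) : Ctrl δ i0 (Dv (ex i)) := by
  intro K hK hKU
  refine (ctrl_grad hδ i0 hK hKU).mono fun t0 a u _ hu => ?_
  have cDu : ∀ v, Continuous (Dv v u) := fun v => (hu.sm.Dv v).cont
  exact integral_mono (ion (by fun_prop) hK t0) (ion (by fun_prop) hK t0)
    fun p => single_le (fun j => Dv (ex j) u p) i

theorem ctrl_et {d : ℕ} {δ : ℝ} (hδ : 0 < δ) (i0 : Fin d) : Ctrl δ i0 (Dv (et d)) := by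
  intro K hK hKU
  obtain ⟨η, hη, hc, hU, h0, hl, h1⟩ := cutoff hK (isOpen_UU d) hKU
  obtain ⟨C, hC, H⟩ := tder hδ hη hc hU
  refine ((ctrl_grad hδ i0 hc hU).const_mul hC).mono fun t0 a u hCo hu => ?_
  have cDu : ∀ v, Continuous (Dv v u) := fun v => (hu.sm.Dv v).cont
  exact (K_cut hη hc hK h1 (by fun_prop) (fun p => by positivity) t0).trans (H i0 t0 a u hCo hu)

theorem tan_ex {d : ℕ} {i0 i : Fin d} (h : i ≠ i0) : Tan i0 (ex i) := by
  simp [Tan, ex, h.symm]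

theorem ctrl_exex {d : ℕ} {δ : ℝ} (hδ : 0 < δ) (i0 j k : Fin d) (h : ¬ (j = i0 ∧ k = i0)) :
    Ctrl δ i0 (fun u => Dv (ex j) (Dv (ex k) u)) := by
  intro K hK hKU
  by_cases hk : k = i0
  · have hj : j ≠ i0 := fun hj => h ⟨hj, hk⟩
    have := Bd.comp (ctrl_ex hδ i0 k K hK hKU) (ctrl_ex hδ i0 j) (fun t0 a u hu => hu.Dv (tan_ex hj))
    refine this.mono fun t0 a u _ hu => ?_
    rw [Dv_comm hu.sm]
  · have := Bd.comp (ctrl_ex hδ i0 j K hK hKU) (ctrl_ex hδ i0 k) (fun t0 a u hu => hu.Dv (tan_ex hk))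
    exact this

/-- auxiliary family -/
def TT {d : ℕ} (i0 : Fin d) (q : Fin d × Fin d) (u : ℝ × (Fin d → ℝ) → ℝ) :
    ℝ × (Fin d → ℝ) → ℝ :=
  if q = (i0, i0) then Dv (et d) u else Dv (ex q.1) (Dv (ex q.2) u)

theorem ctrl_00 {d : ℕ} {δ : ℝ} (hδ : 0 < δ) (i0 : Fin d) :
    Ctrl δ i0 (fun u => Dv (ex i0) (Dv (ex i0) u)) := by
  intro K hK hKU
  have hT : ∀ q, Ctrl δ i0 (TT i0 q) := by
    intro q
    by_cases h : q = (i0, i0)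
    · have : TT i0 q = Dv (et d) := by funext u; simp [TT, h]
      rw [this]; exact ctrl_et hδ i0
    · have : TT i0 q = fun u => Dv (ex q.1) (Dv (ex q.2) u) := by funext u; simp [TT, h]
      rw [this]; exact ctrl_exex hδ i0 _ _ (fun h' => h (Prod.ext h'.1 h'.2))
  set Γ := δ⁻¹ + δ⁻¹ ^ 2 with hΓ
  have hΓ0 : 0 ≤ Γ := by positivity
  set n : ℝ := ((Finset.univ : Finset (Fin d × Fin d)).card : ℝ)
  refine ((Bd.sum Finset.univ fun q => hT q K hK hKU).const_mul
    (x := n * Γ ^ 2) (by positivity)).mono fun t0 a u hCo hu => ?_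
  have cTT : ∀ q, Continuous (TT i0 q u) := by
    intro q; unfold TT; split_ifs
    · exact (hu.sm.Dv _).cont
    · exact ((hu.sm.Dv _).Dv _).cont
  have cL : Continuous (Dv (ex i0) (Dv (ex i0) u)) := ((hu.sm.Dv _).Dv _).cont
  rw [← integral_finsetSum _ (fun q _ => ion (F := fun p => TT i0 q u p ^ 2)
    (by have := cTT q; fun_prop) hK t0), ← integral_const_mul]
  obtain ⟨τ, hτ, he⟩ := hu.eq
  have rs : (mu d t0).restrict K = volume.restrict (K ∩ {p | t0 < p.1}) := by
    rw [mu, Measure.restrict_restrict hK.measurableSet]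
  refine integral_mono_ae (ion (by fun_prop) hK t0) (ion (by fun_prop) hK t0) ?_
  rw [rs]
  refine (ae_restrict_iff' (hK.measurableSet.inter (ms d t0))).2
    (Filter.Eventually.of_forall fun p hp => ?_)
  simp only
  have E := he p (hτ.trans hp.2) (hKU hp.1)
  set γ : Fin d × Fin d → ℝ := fun q => if q = (i0, i0) then bb i0 a p.2 else cc i0 a q.1 q.2 p
    with hγ
  have hγb : ∀ q, |γ q| ≤ Γ := by
    intro q
    simp only [hγ]
    have h1 : 0 ≤ δ⁻¹ := by positivity
    split_ifs
    · have := bb_abs hCo i0 p.2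
      nlinarith
    · have := cc_abs hCo i0 q.1 q.2 p
      linarith
  have a0 : a (p.2 i0) i0 i0 ≠ 0 := by have := hCo.diag_lo (p.2 i0) i0; linarith
  have key : Dv (ex i0) (Dv (ex i0) u) p = - ∑ q, γ q * TT i0 q u p := by
    rw [← Fintype.sum_prod_type'
      (f := fun j k => a (p.2 i0) j k * Dv (ex j) (Dv (ex k) u) p),
      ← Finset.add_sum_erase _ _ (Finset.mem_univ (i0, i0))] at E
    rw [← Finset.add_sum_erase _ _ (Finset.mem_univ (i0, i0))]
    have e1 : ∑ q ∈ Finset.univ.erase (i0, i0), γ q * TT i0 q u p =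
        bb i0 a p.2 * ∑ q ∈ Finset.univ.erase (i0, i0),
          a (p.2 i0) q.1 q.2 * Dv (ex q.1) (Dv (ex q.2) u) p := by
      rw [Finset.mul_sum]
      refine Finset.sum_congr rfl fun q hq => ?_
      have hq' : q ≠ (i0, i0) := Finset.ne_of_mem_erase hq
      simp only [hγ, TT, if_neg hq']
      rw [show cc i0 a q.1 q.2 p = a (p.2 i0) q.1 q.2 * bb i0 a p.2 from rfl]; ring
    rw [e1]
    simp only [hγ, TT, if_true]
    simp only at E
    have hb : bb i0 a p.2 * a (p.2 i0) i0 i0 = 1 := inv_mul_cancel₀ a0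
    linear_combination (bb i0 a p.2) * E - (Dv (ex i0) (Dv (ex i0) u) p) * hb
  rw [key, neg_sq]
  refine (sq_sum_le_card_mul_sum_sq).trans ?_
  rw [mul_assoc]
  refine mul_le_mul_of_nonneg_left ?_ (by positivity)
  rw [Finset.mul_sum]
  refine Finset.sum_le_sum fun q _ => ?_
  rw [mul_pow]
  exact mul_le_mul_of_nonneg_right (sq_le_sq' (abs_le.1 (hγb q)).1 (abs_le.1 (hγb q)).2)
    (sq_nonneg _)

/-- iterated derivative, innermost first -/
def Dl {d : ℕ} : List (ℝ × (Fin d → ℝ)) → (ℝ × (Fin d → ℝ) → ℝ) → (ℝ × (Fin d → ℝ) → ℝ)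
  | [], f => f
  | v :: L, f => Dl L (Dv v f)

theorem Dl_sm {d : ℕ} (L : List (ℝ × (Fin d → ℝ))) {f : ℝ × (Fin d → ℝ) → ℝ} (hf : Sm f) :
    Sm (Dl L f) := by
  induction L generalizing f with
  | nil => exact hf
  | cons v L ih => exact ih (hf.Dv v)

theorem Dl_ts {d : ℕ} (L : List (ℝ × (Fin d → ℝ))) (f : ℝ × (Fin d → ℝ) → ℝ) :
    tsupport (Dl L f) ⊆ tsupport f := by
  induction L generalizing f with
  | nil => exact le_rfl
  | cons v L ih => exact (ih _).trans (tsupport_Dv f v)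

theorem Dl_add {d : ℕ} (L : List (ℝ × (Fin d → ℝ))) {f g : ℝ × (Fin d → ℝ) → ℝ} (hf : Sm f)
    (hg : Sm g) : Dl L (fun p => f p + g p) = fun p => Dl L f p + Dl L g p := by
  induction L generalizing f g with
  | nil => rfl
  | cons v L ih => simp only [Dl]; rw [Dv_add hf hg, ih (hf.Dv v) (hg.Dv v)]

theorem Dl_cs {d : ℕ} (L : List (ℝ × (Fin d → ℝ))) {f : ℝ × (Fin d → ℝ) → ℝ}
    (hf : HasCompactSupport f) : HasCompactSupport (Dl L f) :=
  hf.of_isClosed_subset (isClosed_tsupport _) (Dl_ts L f)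

theorem sq_add_int {d : ℕ} {f g : ℝ × (Fin d → ℝ) → ℝ} (hf : Sm f) (hfc : HasCompactSupport f)
    (hg : Sm g) (hgc : HasCompactSupport g) (t0 : ℝ) :
    ∫ p, (f p + g p) ^ 2 ∂(mu d t0) ≤
      2 * ∫ p, f p ^ 2 ∂(mu d t0) + 2 * ∫ p, g p ^ 2 ∂(mu d t0) := by
  have c1 := hf.cont
  have c2 := hg.cont
  have i1 : Integrable (fun p => f p ^ 2) (mu d t0) :=
    int_mu' (by fun_prop) (cs_of hfc (by intro p h _; simp [h])) t0
  have i2 : Integrable (fun p => g p ^ 2) (mu d t0) :=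
    int_mu' (by fun_prop) (cs_of hgc (by intro p h _; simp [h])) t0
  have i3 : Integrable (fun p => (f p + g p) ^ 2) (mu d t0) :=
    int_mu' (by fun_prop) (by
      have : HasCompactSupport (fun p => f p + g p) := hfc.add hgc
      have := this.mul_left (f := fun p => f p + g p)
      refine this.mono' ?_
      intro p hp
      apply subset_tsupport
      intro h; apply hp
      simp only [Pi.mul_apply] at h
      simp only
      rw [sq]; exact h) t0
  rw [← integral_const_mul, ← integral_const_mul, ← integral_add (i1.const_mul 2) (i2.const_mul 2)]
  refine integral_mono i3 ((i1.const_mul 2).add (i2.const_mul 2)) fun p => ?_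
  simp only [Pi.add_apply]
  nlinarith [sq_nonneg (f p - g p)]

structure Adm {d : ℕ} (i0 : Fin d) (T : (ℝ × (Fin d → ℝ) → ℝ) → (ℝ × (Fin d → ℝ) → ℝ)) : Prop where
  sm : ∀ u, Sm u → Sm (T u)
  comm : ∀ u v, Sm u → Dv v (T u) = T (Dv v u)

theorem leib {d : ℕ} {δ : ℝ} {i0 : Fin d}
    {T : (ℝ × (Fin d → ℝ) → ℝ) → (ℝ × (Fin d → ℝ) → ℝ)} (hA : Adm i0 T) (hT : Ctrl δ i0 T)
    (L : List (ℝ × (Fin d → ℝ))) (hL : ∀ v ∈ L, Tan i0 v ∧ Ctrl δ i0 (Dv v))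
    {ψ : ℝ × (Fin d → ℝ) → ℝ} (hψ : Sm ψ) (hc : HasCompactSupport ψ) (hU : tsupport ψ ⊆ UU d) :
    Bd δ i0 (fun t0 u => ∫ p, (Dl L (fun p => ψ p * T u p) p) ^ 2 ∂(mu d t0)) := by
  induction L generalizing ψ with
  | nil =>
    obtain ⟨M, hM0, hM⟩ := bdd_of hψ.cont hc
    refine ((hT (tsupport ψ) hc hU).const_mul (x := M ^ 2) (by positivity)).mono
      fun t0 a u hCo hu => ?_
    have c1 := hψ.cont
    have c2 := (hA.sm u hu.sm).cont
    rw [← integral_const_mul, ← integral_indicator (isClosed_tsupport ψ).measurableSet]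
    simp only [Dl]
    refine integral_mono (int_mu' (by fun_prop) (cs_of hc (by intro p h h'; simp [h])) t0) ?_ ?_
    · exact (ion (by fun_prop) hc t0).integrable_indicator (isClosed_tsupport ψ).measurableSet
    · intro p
      simp only
      by_cases hp : p ∈ tsupport ψ
      · rw [Set.indicator_of_mem hp, mul_pow]
        exact mul_le_mul_of_nonneg_right (sq_le_sq' (abs_le.1 (hM p)).1 (abs_le.1 (hM p)).2)
          (sq_nonneg _)
      · rw [Set.indicator_of_notMem hp, image_eq_zero_of_notMem_tsupport hp]
        simp
  | cons v L ih =>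
    have hL' : ∀ v ∈ L, Tan i0 v ∧ Ctrl δ i0 (Dv v) := fun w hw => hL w (List.mem_cons_of_mem _ hw)
    obtain ⟨tv, cv⟩ := hL v List.mem_cons_self
    have b1 := ih hL' (hψ.Dv v) (cs_Dv hc v) ((tsupport_Dv ψ v).trans hU)
    have b2 := Bd.comp (ih hL' hψ hc hU) cv (fun t0 a u hu => hu.Dv tv)
    refine ((b1.const_mul (x := 2) (by norm_num)).add (b2.const_mul (x := 2) (by norm_num))).mono
      fun t0 a u hCo hu => ?_
    have s1 := hA.sm u hu.sm
    have e : Dl (v :: L) (fun p => ψ p * T u p) = fun p =>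
        Dl L (fun p => Dv v ψ p * T u p) p + Dl L (fun p => ψ p * T (Dv v u) p) p := by
      simp only [Dl]
      rw [Dv_mul hψ s1, hA.comm u v hu.sm,
        Dl_add L ((hψ.Dv v).mul s1) (hψ.mul (hA.sm _ (hu.sm.Dv v)))]
    rw [e]
    exact sq_add_int (Dl_sm L ((hψ.Dv v).mul s1)) (Dl_cs L (cs_Dv hc v).mul_right)
      (Dl_sm L (hψ.mul (hA.sm _ (hu.sm.Dv v)))) (Dl_cs L hc.mul_right) t0


theorem one_dim {φ : ℝ → ℝ} (h : ContDiff ℝ 1 φ) (hc : HasCompactSupport φ) (t0 : ℝ) :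
    ‖φ t0‖ₑ ≤ ∫⁻ t in Set.Ioi t0, ‖deriv φ t‖ₑ := by
  have := hc.integral_Ioi_deriv_eq h t0
  have e : ‖φ t0‖ₑ = ‖∫ t in Set.Ioi t0, deriv φ t‖ₑ := by rw [this, enorm_neg]
  rw [e]
  exact enorm_integral_le_lintegral_enorm _

theorem step_t {d : ℕ} {F : ℝ × (Fin d → ℝ) → ℝ} (hF : Sm F) (hs : HasCompactSupport F)
    (t0 : ℝ) (x : Fin d → ℝ) :
    ‖F (t0, x)‖ₑ ≤ ∫⁻ t in Set.Ioi t0, ‖Dv (et d) F (t, x)‖ₑ := by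
  have hder : ∀ t, deriv (fun t => F (t, x)) t = Dv (et d) F (t, x) := by
    intro t
    have h1 : HasDerivAt (fun t : ℝ => ((t, x) : ℝ × (Fin d → ℝ))) (1, 0) t :=
      (hasDerivAt_id t).prodMk (hasDerivAt_const t x)
    exact ((hF.diff (t, x)).hasFDerivAt.comp_hasDerivAt t h1).deriv
  have hsm : ContDiff ℝ 1 (fun t => F (t, x)) :=
    (ContDiff.of_le hF (by exact_mod_cast le_top)).comp (by fun_prop)
  have hcs : HasCompactSupport (fun t => F (t, x)) :=
    hs.comp_isClosedEmbedding (g := fun t : ℝ => ((t, x) : ℝ × (Fin d → ℝ)))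
      ((Topology.IsClosedEmbedding.of_continuous_injective_isClosedMap (by fun_prop)
        (fun a b h => by simpa using h) (isClosedMap_prodMk_right x)))
  have := one_dim hsm hcs t0
  simp_rw [hder] at this
  exact this

theorem step_x {d : ℕ} {F : ℝ × (Fin d → ℝ) → ℝ} (hF : Sm F) (hs : HasCompactSupport F)
    (t : ℝ) (x : Fin d → ℝ) (i : Fin d) :
    ‖F (t, x)‖ₑ ≤ ∫⁻ s, ‖Dv (ex i) F (t, Function.update x i s)‖ₑ := by
  have hg : ∀ s, HasDerivAt (fun s : ℝ => ((t, Function.update x i s) : ℝ × (Fin d → ℝ))) (ex i) s :=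
    fun s => (hasDerivAt_const s t).prodMk (hasDerivAt_update x i s)
  have hder : ∀ s, deriv (fun s => F (t, Function.update x i s)) s
      = Dv (ex i) F (t, Function.update x i s) := fun s =>
    ((hF.diff (t, Function.update x i s)).hasFDerivAt.comp_hasDerivAt s (hg s)).deriv
  have hsm : ContDiff ℝ 1 (fun s => F (t, Function.update x i s)) :=
    (ContDiff.of_le hF (by exact_mod_cast le_top)).comp
      (contDiff_const.prodMk (contDiff_update 1 x i))
  have hcs : HasCompactSupport (fun s => F (t, Function.update x i s)) := by
    refine HasCompactSupport.of_support_subset_isCompact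
      (K := (fun p : ℝ × (Fin d → ℝ) => p.2 i) '' tsupport F)
      (IsCompact.image hs (by fun_prop)) ?_
    intro s h
    exact ⟨(t, Function.update x i s), subset_tsupport _ h, by simp⟩
  have := one_dim hsm hcs (x i)
  simp_rw [hder] at this
  rw [Function.update_eq_self] at this
  exact this.trans (setLIntegral_le_lintegral _ _)

theorem sob_x {d : ℕ} (L : List (Fin d)) (hL : L.Nodup) {F : ℝ × (Fin d → ℝ) → ℝ} (hF : Sm F)
    (hs : HasCompactSupport F) (t : ℝ) (x : Fin d → ℝ) :
    ‖F (t, x)‖ₑ ≤ lmarginal (fun _ : Fin d => (volume : Measure ℝ)) L.toFinset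
      (fun y => ‖Dl (L.map ex) F (t, y)‖ₑ) x := by
  induction L generalizing F x with
  | nil => simp [Dl]
  | cons i L ih =>
    obtain ⟨hi, hL'⟩ := List.nodup_cons.1 hL
    refine (step_x hF hs t x i).trans ?_
    have cm : Continuous (Dl ((i :: L).map ex) F) := (Dl_sm _ hF).cont
    rw [List.toFinset_cons, lmarginal_insert _ (by
      have : Continuous fun y => Dl ((i :: L).map ex) F (t, y) := by fun_prop
      exact this.measurable.enorm) (by simpa using hi)]
    exact lintegral_mono fun s => ih hL' (hF.Dv _) (cs_Dv hs _) _

theorem Dl_append {d : ℕ} (L L' : List (ℝ × (Fin d → ℝ))) (f : ℝ × (Fin d → ℝ) → ℝ) :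
    Dl (L ++ L') f = Dl L' (Dl L f) := by
  induction L generalizing f with
  | nil => rfl
  | cons v L ih => exact ih _

theorem sob {d : ℕ} (L : List (Fin d)) (hL : L.Nodup) (hu : L.toFinset = Finset.univ)
    {F : ℝ × (Fin d → ℝ) → ℝ} (hF : Sm F)
    (hs : HasCompactSupport F) (t0 : ℝ) (x : Fin d → ℝ) :
    ‖F (t0, x)‖ₑ ≤ ∫⁻ p, ‖Dl (L.map ex ++ [et d]) F p‖ₑ ∂(mu d t0) := by
  refine (sob_x L hL hF hs t0 x).trans ?_
  rw [hu, lmarginal_univ, Dl_append]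
  set G := Dl (L.map ex) F with hG
  have sG : Sm G := Dl_sm _ hF
  have cG : HasCompactSupport G := Dl_cs _ hs
  have e : {p : ℝ × (Fin d → ℝ) | t0 < p.1} = Set.Ioi t0 ×ˢ Set.univ := by
    ext p; simp
  have hv : (volume : Measure (ℝ × (Fin d → ℝ))) = (volume : Measure ℝ).prod volume := rfl
  have cc : Continuous (Dv (et d) G) := (sG.Dv _).cont
  rw [mu, e, hv, ← Measure.prod_restrict, lintegral_prod_symm _ (by
    exact cc.measurable.enorm.aemeasurable)]
  rw [Measure.restrict_univ]
  exact lintegral_mono fun y => step_t sG cG t0 y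

theorem cs_ineq {d : ℕ} {G : ℝ × (Fin d → ℝ) → ℝ} (hG : Continuous G) {S} (hS : IsCompact S)
    (h : tsupport G ⊆ S) (t0 : ℝ) {y : ℝ} (hy : ‖y‖ₑ ≤ ∫⁻ p, ‖G p‖ₑ ∂(mu d t0)) :
    y ^ 2 ≤ (volume.real S + 1) * ∫ p, G p ^ 2 ∂(mu d t0) := by
  have hGc : HasCompactSupport G := hS.of_isClosed_subset (isClosed_tsupport _) h
  have i1 : Integrable G (mu d t0) := int_mu' hG hGc t0
  have i2 : Integrable (fun p => G p ^ 2) (mu d t0) :=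
    int_mu' (by fun_prop) (cs_of hGc (by intro p h _; simp [h])) t0
  set A := ∫ p, |G p| ∂(mu d t0) with hA
  set B := ∫ p, G p ^ 2 ∂(mu d t0)
  have hyA : |y| ≤ A := by
    have e : ∫⁻ p, ‖G p‖ₑ ∂(mu d t0) = ENNReal.ofReal A := by
      rw [hA]; exact (ofReal_integral_norm_eq_lintegral_enorm i1).symm
    rw [e, ← ofReal_norm] at hy
    exact (ENNReal.ofReal_le_ofReal_iff (integral_nonneg fun p => abs_nonneg _)).1 hy
  set V := (mu d t0).real S
  have hfin : volume S ≠ ⊤ := hS.measure_lt_top.ne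
  have hfin' : (mu d t0) S ≠ ⊤ := ((Measure.restrict_apply_le _ S).trans_lt hS.measure_lt_top).ne
  have hV : V ≤ volume.real S := ENNReal.toReal_mono hfin (Measure.restrict_apply_le _ S)
  have hV0 : 0 ≤ V := measureReal_nonneg
  set W := volume.real S + 1
  have hW : 0 < W := by positivity
  have i3 : Integrable (S.indicator fun _ => (1:ℝ)) (mu d t0) :=
    (integrable_indicator_iff hS.measurableSet).2 (integrableOn_const hfin')
  have e3 : ∫ p, S.indicator (fun _ => (1:ℝ)) p ∂(mu d t0) = V := by
    rw [integral_indicator_const _ hS.measurableSet]; simp [V]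
  have key : ∀ l : ℝ, 2 * l * A ≤ l ^ 2 * V + B := by
    intro l
    rw [hA, ← e3, ← integral_const_mul, ← integral_const_mul,
      ← integral_add (i3.const_mul _) i2]
    refine integral_mono (i1.abs.const_mul _) ((i3.const_mul _).add i2) fun p => ?_
    simp only
    by_cases hp : p ∈ S
    · rw [Set.indicator_of_mem hp]
      nlinarith [sq_nonneg (l - |G p|), sq_abs (G p)]
    · rw [Set.indicator_of_notMem hp, image_eq_zero_of_notMem_tsupport (fun q => hp (h q))]
      simp
  have hk := key (A / W)
  have h1 : y ^ 2 ≤ A ^ 2 := by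
    rw [← sq_abs y]; exact pow_le_pow_left₀ (abs_nonneg _) hyA 2
  have h2 : (A / W) ^ 2 * V ≤ (A / W) ^ 2 * W :=
    mul_le_mul_of_nonneg_left (by linarith) (sq_nonneg _)
  have h3 : (A / W) ^ 2 * W = A ^ 2 / W := by field_simp
  have h4 : 2 * (A / W) * A = 2 * (A ^ 2 / W) := by ring
  have h5 : A ^ 2 / W ≤ B := by linarith
  have := (div_le_iff₀ hW).1 h5
  linarith

theorem pt_bd {d : ℕ} {δ : ℝ} (hδ : 0 < δ) {i0 : Fin d}
    {T : (ℝ × (Fin d → ℝ) → ℝ) → (ℝ × (Fin d → ℝ) → ℝ)} (hA : Adm i0 T) (hT : Ctrl δ i0 T)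
    (hT' : Ctrl δ i0 (fun u => Dv (ex i0) (T u)))
    {ψ : ℝ × (Fin d → ℝ) → ℝ} (hψ : Sm ψ) (hc : HasCompactSupport ψ) (hU : tsupport ψ ⊆ UU d) :
    ∃ C : ℝ, 0 ≤ C ∧ ∃ K : Set (ℝ × (Fin d → ℝ)), IsCompact K ∧ K ⊆ UU d ∧
    ∀ t0 a u x, Coef δ a → Sol i0 t0 a u →
      (ψ (t0, x) * T u (t0, x)) ^ 2 ≤ C * ∫ p in K, u p ^ 2 ∂(mu d t0) := by
  set R : List (Fin d) := (Finset.univ.erase i0).toList with hR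
  set L := R.map ex ++ [et d] with hLd
  have hL : ∀ v ∈ L, Tan i0 v ∧ Ctrl δ i0 (Dv v) := by
    intro v hv
    rw [hLd, List.mem_append, List.mem_singleton, List.mem_map] at hv
    rcases hv with ⟨i, hi, rfl⟩ | rfl
    · have : i ≠ i0 := by simpa [hR] using hi
      exact ⟨tan_ex this, ctrl_ex hδ i0 i⟩
    · exact ⟨tan_et i0, ctrl_et hδ i0⟩
  have hA' : Adm i0 (fun u => Dv (ex i0) (T u)) :=
    ⟨fun u hu => (hA.sm u hu).Dv _, fun u v hu => by
      rw [Dv_comm (hA.sm u hu), hA.comm u v hu]⟩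
  have b1 := leib hA hT L hL (hψ.Dv (ex i0)) (cs_Dv hc _) ((tsupport_Dv ψ _).trans hU)
  have b2 := leib hA' hT' L hL hψ hc hU
  have b : Bd δ i0 (fun t0 u => ∫ p, (Dl (ex i0 :: L) (fun p => ψ p * T u p) p) ^ 2 ∂(mu d t0)) := by
    refine ((b1.const_mul (x := 2) (by norm_num)).add (b2.const_mul (x := 2) (by norm_num))).mono
      fun t0 a u hCo hu => ?_
    have s1 := hA.sm u hu.sm
    have e : Dl (ex i0 :: L) (fun p => ψ p * T u p) = fun p =>
        Dl L (fun p => Dv (ex i0) ψ p * T u p) p + Dl L (fun p => ψ p * Dv (ex i0) (T u) p) p := by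
      simp only [Dl]
      rw [Dv_mul hψ s1, Dl_add L ((hψ.Dv _).mul s1) (hψ.mul (s1.Dv _))]
    rw [e]
    exact sq_add_int (Dl_sm L ((hψ.Dv _).mul s1)) (Dl_cs L (cs_Dv hc _).mul_right)
      (Dl_sm L (hψ.mul (s1.Dv _))) (Dl_cs L hc.mul_right) t0
  obtain ⟨C, hC, K, hK, hKU, H⟩ := b.const_mul (x := volume.real (tsupport ψ) + 1) (by positivity)
  refine ⟨C, hC, K, hK, hKU, fun t0 a u x hCo hu => le_trans ?_ (H t0 a u hCo hu)⟩
  have sF : Sm (fun p => ψ p * T u p) := hψ.mul (hA.sm u hu.sm)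
  have cF : HasCompactSupport (fun p => ψ p * T u p) := hc.mul_right
  have hn : (i0 :: R).Nodup := by
    rw [List.nodup_cons]
    exact ⟨by simp [hR], Finset.nodup_toList _⟩
  have hu' : (i0 :: R).toFinset = Finset.univ := by
    ext i; simp [hR]
  have := sob (i0 :: R) hn hu' sF cF t0 x
  refine cs_ineq (Dl_sm (ex i0 :: L) sF).cont hc
    ((Dl_ts _ _).trans (tsupport_mul_subset_left)) t0 this

theorem ballE_cl {d : ℕ} {ρ : ℝ} {x : Fin d → ℝ} (hx : x ∈ ballE d ρ) :
    x ∈ {x : Fin d → ℝ | ∑ j, (x j) ^ 2 ≤ ρ ^ 2} := by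
  have h1 : ∑ j, (x j) ^ 2 < ρ ^ 2 := hx
  show ∑ j, (x j) ^ 2 ≤ ρ ^ 2
  exact h1.le

theorem ballE_mono {d : ℕ} {ρ σ : ℝ} (h0 : 0 ≤ ρ) (h : ρ ≤ σ) : ballE d ρ ⊆ ballE d σ :=
  fun _ hx => lt_of_lt_of_le (b := ρ ^ 2) hx (pow_le_pow_left₀ h0 h 2)

theorem cball {d : ℕ} (ρ : ℝ) (h : 0 ≤ ρ) :
    IsCompact {x : Fin d → ℝ | ∑ j, (x j) ^ 2 ≤ ρ ^ 2} := by
  refine (isCompact_Icc (a := fun _ : Fin d => -ρ) (b := fun _ => ρ)).of_isClosed_subset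
    (isClosed_le (by fun_prop) (by fun_prop)) fun x hx => ?_
  have : ∀ i, |x i| ≤ ρ := fun i => abs_le_of_sq_le_sq ((single_le x i).trans hx) h
  exact ⟨fun i => (abs_le.1 (this i)).1, fun i => (abs_le.1 (this i)).2⟩

theorem ext_sol {d : ℕ} {i0 : Fin d} {a : ℝ → Fin d → Fin d → ℝ} {h : ℝ × (Fin d → ℝ) → ℝ}
    (hs : ContDiffOn ℝ (⊤ : ℕ∞) h (Qc d 4))
    (he : ∀ p ∈ Qc d 4, pdt h p + ∑ j, ∑ k, a (p.2 i0) j k * pdxx j k h p = 0)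
    {t0 : ℝ} (ht : 0 < t0) :
    ∃ u, Sol i0 t0 a u ∧ ∀ p ∈ Set.Ioo (t0 / 2) 5 ×ˢ ballE d 3, u p = h p := by
  have oQ : IsOpen (Qc d 4) := isOpen_Ioo.prod (isOpen_ballE d 4)
  have hK : IsCompact (Set.Icc (t0 / 2) 5 ×ˢ {x : Fin d → ℝ | ∑ j, (x j) ^ 2 ≤ 3 ^ 2}) :=
    isCompact_Icc.prod (cball 3 (by norm_num))
  have hKQ : Set.Icc (t0 / 2) 5 ×ˢ {x : Fin d → ℝ | ∑ j, (x j) ^ 2 ≤ 3 ^ 2} ⊆ Qc d 4 := by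
    rintro ⟨t, x⟩ ⟨⟨h1, h2⟩, h3⟩
    simp only [Set.mem_ofPred_eq] at h1 h2 h3
    refine ⟨⟨by simp only; linarith, by simp only; linarith⟩, ?_⟩
    show ∑ j, (x j) ^ 2 < 4 ^ 2
    linarith
  obtain ⟨χ, hχ, hc, hU, h0, hl, h1⟩ := cutoff hK oQ hKQ
  have oO : IsOpen (Set.Ioo (t0 / 2) 5 ×ˢ ballE d 3) := isOpen_Ioo.prod (isOpen_ballE d 3)
  have hO : ∀ p ∈ Set.Ioo (t0 / 2) 5 ×ˢ ballE d 3, χ p * h p = h p := by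
    rintro p ⟨hp1, hp2⟩
    rw [h1 p ⟨Set.Ioo_subset_Icc_self hp1, ballE_cl hp2⟩, one_mul]
  refine ⟨fun p => χ p * h p, ⟨?_, t0 / 2, by linarith, fun p hp hpU => ?_⟩, hO⟩
  · refine contDiff_iff_contDiffAt.2 fun p => ?_
    by_cases hp : p ∈ tsupport χ
    · exact (ContDiff.contDiffAt hχ).mul (hs.contDiffAt (oQ.mem_nhds (hU hp)))
    · have : (fun p => χ p * h p) =ᶠ[nhds p] fun _ => 0 := by
        filter_upwards [(isClosed_tsupport χ).isOpen_compl.mem_nhds hp] with q hq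
        rw [image_eq_zero_of_notMem_tsupport hq, zero_mul]
      exact contDiffAt_const.congr_of_eventuallyEq this
  · have hpO : p ∈ Set.Ioo (t0 / 2) 5 ×ˢ ballE d 3 :=
      ⟨⟨hp, hpU.1.2.trans (by norm_num)⟩, ballE_mono (by norm_num) (by norm_num) hpU.2⟩
    have ev : (fun p => χ p * h p) =ᶠ[nhds p] h :=
      Filter.eventually_of_mem (oO.mem_nhds hpO) hO
    have ev1 : ∀ v, Dv v (fun p => χ p * h p) =ᶠ[nhds p] Dv v h := fun v =>
      ev.fderiv.mono fun q hq => by unfold Dv; rw [hq]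
    have ev2 : ∀ v w, Dv v (Dv w (fun p => χ p * h p)) p = Dv v (Dv w h) p := fun v w =>
      DFunLike.congr_fun (ev1 w).fderiv_eq v
    have hQ : p ∈ Qc d 4 := hKQ ⟨Set.Ioo_subset_Icc_self hpO.1, ballE_cl hpO.2⟩
    rw [(ev1 _).eq_of_nhds]
    simp_rw [ev2]
    exact he p hQ

theorem L2_bd {d : ℕ} {u h : ℝ × (Fin d → ℝ) → ℝ} {t0 r : ℝ} (ht : 0 < t0) (hr2 : 2 < r)
    (hr3 : r < 3) (hi : IntegrableOn (fun p => (h p) ^ 2) (Qc d 4))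
    (hu : ∀ p ∈ Set.Ioo (t0 / 2) 5 ×ˢ ballE d 3, u p = h p) {K : Set (ℝ × (Fin d → ℝ))}
    (hK : IsCompact K) (hKU : K ⊆ UU d) :
    ∫ p in K, u p ^ 2 ∂(mu d t0) ≤ ∫ p in Qc d r, (h p) ^ 2 := by
  rw [mu, Measure.restrict_restrict hK.measurableSet]
  have hm : MeasurableSet (K ∩ {p : ℝ × (Fin d → ℝ) | t0 < p.1}) := hK.measurableSet.inter (ms d t0)
  have : ∫ p in K ∩ {p : ℝ × (Fin d → ℝ) | t0 < p.1}, u p ^ 2 =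
      ∫ p in K ∩ {p : ℝ × (Fin d → ℝ) | t0 < p.1}, h p ^ 2 := by
    refine setIntegral_congr_fun hm ?_
    rintro p ⟨hp, hp'⟩
    have hp' : t0 < p.1 := hp'
    have hpU := hKU hp
    simp only
    rw [hu p ⟨⟨by linarith, hpU.1.2.trans (by norm_num)⟩,
      ballE_mono (by norm_num) (by norm_num) hpU.2⟩]
  rw [this]
  have sub : Qc d r ⊆ Qc d 4 := Set.prod_mono
    (Set.Ioo_subset_Ioo le_rfl (pow_le_pow_left₀ (by linarith) (by linarith) 2))
    (ballE_mono (by linarith) (by linarith))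
  refine setIntegral_mono_set (hi.mono_set sub)
    (Filter.Eventually.of_forall fun p => sq_nonneg (h p)) (Filter.Eventually.of_forall ?_)
  rintro p ⟨hp, hp'⟩
  have hp' : t0 < p.1 := hp'
  have hpU := hKU hp
  have h4 : p.1 < 4 := hpU.1.2
  exact ⟨⟨by linarith, by nlinarith⟩, ballE_mono (by norm_num) (by linarith) hpU.2⟩

theorem fin_bd {δ : ℝ} {d : ℕ} (hδ : 0 < δ) {i0 : Fin d}
    {T : (ℝ × (Fin d → ℝ) → ℝ) → (ℝ × (Fin d → ℝ) → ℝ)} (hA : Adm i0 T) (hT : Ctrl δ i0 T)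
    (hT' : Ctrl δ i0 (fun u => Dv (ex i0) (T u)))
    (hloc : ∀ u h p, u =ᶠ[nhds p] h → T u p = T h p)
    {r : ℝ} (hr2 : 2 < r) (hr3 : r < 3) :
    ∃ N : ℝ, 0 ≤ N ∧ ∀ a h, Coef δ a → ContDiffOn ℝ (⊤ : ℕ∞) h (Qc d 4) →
      IntegrableOn (fun p => (h p) ^ 2) (Qc d 4) →
      (∀ p ∈ Qc d 4, pdt h p + ∑ j, ∑ k, a (p.2 i0) j k * pdxx j k h p = 0) →
      ∀ p ∈ Qc d 1, |T h p| ≤ N * Real.sqrt (∫ p in Qc d r, (h p) ^ 2) := by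
  have hK : IsCompact (Set.Icc (0:ℝ) 1 ×ˢ {x : Fin d → ℝ | ∑ j, (x j) ^ 2 ≤ 1 ^ 2}) :=
    isCompact_Icc.prod (cball 1 (by norm_num))
  have hKU : Set.Icc (0:ℝ) 1 ×ˢ {x : Fin d → ℝ | ∑ j, (x j) ^ 2 ≤ 1 ^ 2} ⊆ UU d := by
    rintro ⟨t, x⟩ ⟨⟨h1, h2⟩, h3⟩
    simp only [Set.mem_ofPred_eq] at h1 h2 h3
    refine ⟨⟨by simp only; linarith, by simp only; linarith⟩, ?_⟩
    show ∑ j, (x j) ^ 2 < 2 ^ 2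
    linarith
  obtain ⟨ψ, hψ, hc, hU, -, -, h1⟩ := cutoff hK (isOpen_UU d) hKU
  obtain ⟨C, hC, K, hKc, hKU', H⟩ := pt_bd hδ hA hT hT' hψ hc hU
  refine ⟨Real.sqrt C, Real.sqrt_nonneg _, fun a h hCo hs hi he p hp => ?_⟩
  obtain ⟨t0, x⟩ := p
  obtain ⟨⟨ht, ht1⟩, hx⟩ := hp
  simp only at ht ht1 hx
  obtain ⟨u, hu, huh⟩ := ext_sol hs he ht
  have hO : (t0, x) ∈ Set.Ioo (t0 / 2) 5 ×ˢ ballE d 3 :=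
    ⟨⟨by simp only; linarith, by simp only; linarith⟩, ballE_mono (by norm_num) (by norm_num) hx⟩
  have ev : u =ᶠ[nhds (t0, x)] h := Filter.eventually_of_mem
    ((isOpen_Ioo.prod (isOpen_ballE d 3)).mem_nhds hO) huh
  have := H t0 a u x hCo hu
  rw [h1 _ ⟨⟨ht.le, by simp only; linarith⟩, ballE_cl hx⟩, one_mul, hloc _ _ _ ev] at this
  have h2 := this.trans (mul_le_mul_of_nonneg_left (L2_bd ht hr2 hr3 hi huh hKc hKU') hC)
  rw [← Real.sqrt_mul hC]
  exact Real.abs_le_sqrt h2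

end

theorem stmt10 (d : ℕ) (hd : 0 < d) (δ : ℝ) (hδ : δ ∈ Set.Ioo (0 : ℝ) 1)
    (r : ℝ) (hr2 : 2 < r) (hr3 : r < 3) :
    ∃ N : ℝ, 0 < N ∧
      ∀ a : ℝ → Fin d → Fin d → ℝ,
        (∀ j k, Measurable fun s => a s j k) →
        (∀ s j k, a s j k = a s k j) →
        (∀ (s : ℝ) (θ : Fin d → ℝ),
          δ * ∑ j, (θ j) ^ 2 ≤ ∑ j, ∑ k, a s j k * θ j * θ k ∧
          ∑ j, ∑ k, a s j k * θ j * θ k ≤ δ⁻¹ * ∑ j, (θ j) ^ 2) →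
        ∀ h : ℝ × (Fin d → ℝ) → ℝ,
          ContDiffOn ℝ (⊤ : ℕ∞) h (Qc d 4) →
          IntegrableOn (fun p => (h p) ^ 2) (Qc d 4) →
          (∀ p ∈ Qc d 4,
            pdt h p + ∑ j, ∑ k, a (p.2 ⟨0, hd⟩) j k * pdxx j k h p = 0) →
          (⨆ p ∈ Qc d 1, |h p|) + (⨆ p ∈ Qc d 1, |pdx ⟨0, hd⟩ h p|)
            ≤ N * Real.sqrt (∫ p in Qc d r, (h p) ^ 2) := by
  obtain ⟨N1, hN1, H1⟩ := fin_bd (d := d) (i0 := ⟨0, hd⟩) hδ.1 (T := fun u => u)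
    ⟨fun u hu => hu, fun u v hu => rfl⟩ (ctrl_id δ _) (ctrl_ex hδ.1 _ _)
    (fun u h p e => e.eq_of_nhds) hr2 hr3
  obtain ⟨N2, hN2, H2⟩ := fin_bd (d := d) (i0 := ⟨0, hd⟩) hδ.1 (T := Dv (ex ⟨0, hd⟩))
    ⟨fun u hu => hu.Dv _, fun u v hu => Dv_comm hu _ _⟩ (ctrl_ex hδ.1 _ _) (ctrl_00 hδ.1 _)
    (fun u h p e => DFunLike.congr_fun (e.fderiv_eq (𝕜 := ℝ)) _) hr2 hr3
  refine ⟨N1 + N2 + 1, by positivity, fun a hm hsy hel h hs hi he => ?_⟩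
  have hCo : Coef δ a := ⟨hδ.1, hm, hsy, fun s θ => (hel s θ).1, fun s θ => (hel s θ).2⟩
  have k1 := H1 a h hCo hs hi he
  have k2 := H2 a h hCo hs hi he
  have s0 := Real.sqrt_nonneg (∫ p in Qc d r, (h p) ^ 2)
  set s := Real.sqrt (∫ p in Qc d r, (h p) ^ 2)
  have l1 : (⨆ p ∈ Qc d 1, |h p|) ≤ N1 * s :=
    Real.iSup_le (fun p => Real.iSup_le (fun hp => k1 p hp) (by positivity)) (by positivity)
  have l2 : (⨆ p ∈ Qc d 1, |pdx ⟨0, hd⟩ h p|) ≤ N2 * s :=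
    Real.iSup_le (fun p => Real.iSup_le (fun hp => k2 p hp) (by positivity)) (by positivity)
  linarith
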